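/- Let S and T be reversible two-way parity transducers with n and m states respectively, such that the output alphabet B of S equals the input alphabet of T. Then there exists a reversible two-way parity transducer U with at most C·n·m states (for some absolute constant C) such that ⟦U⟧ = ⟦T⟧ ∘ ⟦S⟧ as partial functions; in particular dom(U) = { u ∈ dom(S) : ⟦S⟧(u) ∈ dom(T) } and ⟦U⟧(u) = ⟦T⟧(⟦S⟧(u)) for all such u. -/

import Mathlib

namespace Paper

/-! ## Two-way parity automata and transducers over infinite words.

An infinite word over an alphabet `A` is a function `ℕ → A`.
A configuration `⊢ u p v` with `w = u v` is encoded as a pair `(p, |u|) : Q × ℕ`.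
The left end-marker `⊢` is encoded as `(none : Option A)`. -/

/-- A two-way automaton (without acceptance condition): states `Q` partitioned into forward
states (`fwd`) and backward states, an initial forward state, and a transition relation `Δ`
over `Q × (A ∪ {⊢}) × Q` where transitions on the end-marker `⊢` (encoded `none`) go from
backward to forward states. -/
structure TwoWayAut (A : Type) where
  Q : Type
  finQ : Fintype Q
  fwd : Q → Prop
  init : Q
  init_fwd : fwd init
  Δ : Set (Q × Option A × Q)
  marker : ∀ p q, (p, (none : Option A), q) ∈ Δ → ¬ fwd p ∧ fwd q

attribute [instance] TwoWayAut.finQ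

variable {A B : Type}

/-- `StepVia M w c t c'` : from configuration `c`, using transition `t`, the automaton `M`
reaches the successor configuration `c'` on input word `w`. -/
def StepVia (M : TwoWayAut A) (w : ℕ → A) (c : M.Q × ℕ)
    (t : M.Q × Option A × M.Q) (c' : M.Q × ℕ) : Prop :=
  t ∈ M.Δ ∧ t.1 = c.1 ∧ t.2.2 = c'.1 ∧
    ((M.fwd c.1 ∧ t.2.1 = some (w c.2) ∧
        ((M.fwd c'.1 ∧ c'.2 = c.2 + 1) ∨ (¬ M.fwd c'.1 ∧ c'.2 = c.2))) ∨
     (¬ M.fwd c.1 ∧ 0 < c.2 ∧ t.2.1 = some (w (c.2 - 1)) ∧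
        ((M.fwd c'.1 ∧ c'.2 = c.2) ∨ (¬ M.fwd c'.1 ∧ c'.2 = c.2 - 1))) ∨
     (¬ M.fwd c.1 ∧ c.2 = 0 ∧ t.2.1 = none ∧ c'.2 = 0))

/-- The successor relation on configurations. -/
def Step (M : TwoWayAut A) (w : ℕ → A) (c c' : M.Q × ℕ) : Prop :=
  ∃ t, StepVia M w c t c'

/-- An infinite run of `M` on `w`, given by its configurations and the transitions taken. -/
def IsRun (M : TwoWayAut A) (w : ℕ → A) (cfg : ℕ → M.Q × ℕ)
    (tr : ℕ → M.Q × Option A × M.Q) : Prop :=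
  cfg 0 = (M.init, 0) ∧ ∀ i, StepVia M w (cfg i) (tr i) (cfg (i + 1))

/-- The run reads the whole word: the prefix lengths are unbounded. -/
def ReadsWhole (M : TwoWayAut A) (cfg : ℕ → M.Q × ℕ) : Prop :=
  ∀ n : ℕ, ∃ i, n ≤ (cfg i).2

/-- `t` occurs infinitely often in the sequence `tr`. -/
def InfOften {T : Type} (tr : ℕ → T) (t : T) : Prop :=
  ∀ n, ∃ i, n ≤ i ∧ tr i = t

def Deterministic (M : TwoWayAut A) : Prop :=
  ∀ p a q q', (p, a, q) ∈ M.Δ → (p, a, q') ∈ M.Δ → q = q'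

def Codeterministic (M : TwoWayAut A) : Prop :=
  ∀ p p' a q, (p, a, q) ∈ M.Δ → (p', a, q) ∈ M.Δ → p = p'

def Reversible (M : TwoWayAut A) : Prop :=
  Deterministic M ∧ Codeterministic M

def Oneway (M : TwoWayAut A) : Prop := ∀ q, M.fwd q

/-- A two-way parity automaton: a two-way automaton together with a finite family of
coloring functions (indexed by `CIdx`). -/
structure ParityAut (A : Type) extends TwoWayAut A where
  CIdx : Type
  finC : Fintype CIdx
  color : CIdx → (Q × Option A × Q) → ℕ

attribute [instance] ParityAut.finC

/-- The parity acceptance condition: for every coloring function, the minimal color of the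
transitions taken infinitely often is even. -/
def ParityCond (M : ParityAut A) (tr : ℕ → M.Q × Option A × M.Q) : Prop :=
  ∀ c : M.CIdx, Even (sInf {m : ℕ | ∃ t, InfOften tr t ∧ M.color c t = m})

/-- Acceptance of an infinite word by a two-way parity automaton. -/
def ParityAut.Accepts (M : ParityAut A) (w : ℕ → A) : Prop :=
  ∃ cfg tr, IsRun M.toTwoWayAut w cfg tr ∧ ReadsWhole M.toTwoWayAut cfg ∧ ParityCond M tr

/-- All colors of `M` (on its transitions) belong to `{0, …, ℓ-1}`. -/
def ColorsLt (M : ParityAut A) (ℓ : ℕ) : Prop :=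
  ∀ (c : M.CIdx) t, t ∈ M.Δ → M.color c t < ℓ

/-- `l` is a prefix of the infinite word `x`. -/
def IsPrefixOf {C : Type} (l : List C) (x : ℕ → C) : Prop :=
  ∀ (i : ℕ) (h : i < l.length), l.get ⟨i, h⟩ = x i

/-- Concatenation of the first `n` words of a sequence of finite words. -/
def prefixCat {C : Type} (f : ℕ → List C) : ℕ → List C
  | 0 => []
  | n + 1 => prefixCat f n ++ f n

/-- The concatenation of the sequence of finite words `f` is the infinite word `x`. -/
def FlattenTo {C : Type} (f : ℕ → List C) (x : ℕ → C) : Prop :=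
  (∀ n, IsPrefixOf (prefixCat f n) x) ∧ ∀ m, ∃ n, m ≤ (prefixCat f n).length

/-- A two-way parity transducer: a two-way parity automaton (whose underlying automaton is
required to be deterministic via hypotheses) together with an output function. -/
structure TwoWayTrans (A B : Type) extends ParityAut A where
  out : (Q × Option A × Q) → List B

/-- `T.Realizes w x` : the word `w` is accepted by (the deterministic transducer) `T`,
the produced output is infinite and equals `x`.  This is the graph of the partial function
`⟦T⟧ : A^ω ⇀ B^ω`. -/
def TwoWayTrans.Realizes (T : TwoWayTrans A B) (w : ℕ → A) (x : ℕ → B) : Prop :=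
  ∃ cfg tr, IsRun T.toTwoWayAut w cfg tr ∧ ReadsWhole T.toTwoWayAut cfg ∧
    ParityCond T.toParityAut tr ∧ FlattenTo (fun i => T.out (tr i)) x

/-- A two-way Büchi transducer: accepting transitions `acc` instead of coloring functions. -/
structure BuchiTrans (A B : Type) extends TwoWayAut A where
  acc : Set (Q × Option A × Q)
  out : (Q × Option A × Q) → List B

def BuchiTrans.Realizes (T : BuchiTrans A B) (w : ℕ → A) (x : ℕ → B) : Prop :=
  ∃ cfg tr, IsRun T.toTwoWayAut w cfg tr ∧ ReadsWhole T.toTwoWayAut cfg ∧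
    (∀ n, ∃ i, n ≤ i ∧ tr i ∈ T.acc) ∧ FlattenTo (fun i => T.out (tr i)) x

/-- A two-way transducer with no acceptance condition. -/
structure NoAccTrans (A B : Type) extends TwoWayAut A where
  out : (Q × Option A × Q) → List B

def NoAccTrans.Realizes (T : NoAccTrans A B) (w : ℕ → A) (x : ℕ → B) : Prop :=
  ∃ cfg tr, IsRun T.toTwoWayAut w cfg tr ∧ ReadsWhole T.toTwoWayAut cfg ∧
    FlattenTo (fun i => T.out (tr i)) x

/-! ## One-way parity automata, transducers, and copyless parity streaming string
transducers.  A one-way automaton has only forward states and never reads the end-marker,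
so we use a simplified (equivalent) presentation. -/

structure OnewayAut (A : Type) where
  Q : Type
  finQ : Fintype Q
  init : Q
  Δ : Set (Q × A × Q)
  CIdx : Type
  finC : Fintype CIdx
  color : CIdx → (Q × A × Q) → ℕ

attribute [instance] OnewayAut.finQ
attribute [instance] OnewayAut.finC

def OnewayDet (M : OnewayAut A) : Prop :=
  ∀ p a q q', (p, a, q) ∈ M.Δ → (p, a, q') ∈ M.Δ → q = q'

def OnewayRun (M : OnewayAut A) (w : ℕ → A) (s : ℕ → M.Q) : Prop :=
  s 0 = M.init ∧ ∀ i, (s i, w i, s (i + 1)) ∈ M.Δ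

def OnewayParityCond (M : OnewayAut A) (tr : ℕ → M.Q × A × M.Q) : Prop :=
  ∀ c : M.CIdx, Even (sInf {m : ℕ | ∃ t, InfOften tr t ∧ M.color c t = m})

def OnewayAut.Accepts (M : OnewayAut A) (w : ℕ → A) : Prop :=
  ∃ s, OnewayRun M w s ∧ OnewayParityCond M (fun i => (s i, w i, s (i + 1)))

def OnewayColorsLt (M : OnewayAut A) (ℓ : ℕ) : Prop :=
  ∀ (c : M.CIdx) t, t ∈ M.Δ → M.color c t < ℓ

/-- A one-way (deterministic) parity transducer. -/
structure OnewayTrans (A B : Type) extends OnewayAut A where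
  out : (Q × A × Q) → List B

def OnewayTrans.Realizes (T : OnewayTrans A B) (w : ℕ → A) (x : ℕ → B) : Prop :=
  ∃ s, OnewayRun T.toOnewayAut w s ∧
    OnewayParityCond T.toOnewayAut (fun i => (s i, w i, s (i + 1))) ∧
    FlattenTo (fun i => T.out (s i, w i, s (i + 1))) x

/-- Number of occurrences of `a` in the list `l` (classically). -/
noncomputable def occ {C : Type} (a : C) (l : List C) : ℕ :=
  l.countP fun x => @decide (x = a) (Classical.propDecidable _)

/-- A substitution `σ : R → (R ⊎ B)*` is copyless if every register occurs at most once in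
the concatenation of all the `σ r'`. -/
def Copyless {R C : Type} [Fintype R] (σ : R → List (R ⊕ C)) : Prop :=
  ∀ r : R, (∑ r' : R, occ (Sum.inl r) (σ r')) ≤ 1

/-- Applying an assignment `ν : R → B*` (extended to a morphism `(R ⊎ B)* → B*`). -/
def subApply {R C : Type} (ν : R → List C) : List (R ⊕ C) → List C
  | [] => []
  | Sum.inl r :: l => ν r ++ subApply ν l
  | Sum.inr b :: l => b :: subApply ν l

/-- A copyless parity streaming string transducer: a (deterministic) one-way parity
automaton with a finite set `R` of registers, a distinguished output register, and copyless
register updates, where the update of `outReg` always starts with `outReg`. -/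
structure CPSST (A B : Type) extends OnewayAut A where
  R : Type
  finR : Fintype R
  outReg : R
  upd : (Q × A × Q) → R → List (R ⊕ B)
  copyless : ∀ t, @Copyless R B finR (upd t)
  out_form : ∀ t, ∃ γ, upd t outReg = Sum.inl outReg :: γ

attribute [instance] CPSST.finR

/-- The register contents along a run: `ν_0 r = ε` and `ν_{i+1} = ν_i ∘ λ(t_i)`. -/
def regVal (T : CPSST A B) (w : ℕ → A) (s : ℕ → T.Q) : ℕ → T.R → List B
  | 0 => fun _ => []
  | i + 1 => fun r => subApply (regVal T w s i) (T.upd (s i, w i, s (i + 1)) r)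

/-- `T.Realizes w x` : the (deterministic) CPSST `T` has an accepting run on `w` whose
output-register contents are unbounded with limit `x`. -/
def CPSST.Realizes (T : CPSST A B) (w : ℕ → A) (x : ℕ → B) : Prop :=
  ∃ s, OnewayRun T.toOnewayAut w s ∧
    OnewayParityCond T.toOnewayAut (fun i => (s i, w i, s (i + 1))) ∧
    (∀ i, IsPrefixOf (regVal T w s i T.outReg) x) ∧
    (∀ m, ∃ i, m ≤ (regVal T w s i T.outReg).length)

/-- The one-way parity transducer with the same underlying automaton as the CPSST `T`,
which outputs on each transition the (copyless) substitution that `T` applies. -/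
def enrich (T : CPSST A B) :
    OnewayTrans A {σ : T.R → List (T.R ⊕ B) // Copyless σ} where
  toOnewayAut := T.toOnewayAut
  out := fun t => [⟨T.upd t, T.copyless t⟩]

/-! ## Merging forests -/

/-- A merging forest on `(Q⁺ ⊎ Q⁻, χ, ℓ)`: a finite rooted forest (given by a `parent` map
with no cycles) whose leaves (childless nodes) are injectively labeled in `Q⁻` and carry a
`χ`-tuple of integers `< ℓ`, whose roots are injectively labeled in `Q⁺`, and in which every
unary node (exactly one child) is a root. -/
structure MForest (Qp Qm χ : Type) (ℓ : ℕ) where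
  V : Type
  finV : Fintype V
  parent : V → Option V
  acyc : ∀ v : V, ¬ Relation.TransGen (fun a b => parent a = some b) v v
  leafLab : V → Qm
  rootLab : V → Qp
  tup : V → χ → ℕ
  tup_lt : ∀ v, (∀ u, parent u ≠ some v) → ∀ c, tup v c < ℓ
  leaf_inj : ∀ u v, (∀ u', parent u' ≠ some u) → (∀ v', parent v' ≠ some v) →
    leafLab u = leafLab v → u = v
  root_inj : ∀ u v, parent u = none → parent v = none → rootLab u = rootLab v → u = v
  unary_root : ∀ v : V, (∃! u, parent u = some v) → parent v = none

attribute [instance] MForest.finV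

/-- Isomorphism of merging forests: a bijection of the nodes commuting with `parent` and
preserving the leaf labels, the leaf tuples and the root labels. -/
def MFIso {Qp Qm χ : Type} {ℓ : ℕ} (F G : MForest Qp Qm χ ℓ) : Prop :=
  ∃ e : F.V ≃ G.V,
    (∀ v, G.parent (e v) = Option.map e (F.parent v)) ∧
    (∀ v, (∀ u, F.parent u ≠ some v) →
      F.leafLab v = G.leafLab (e v) ∧ ∀ c, F.tup v c = G.tup (e v) c) ∧
    (∀ v, F.parent v = none → F.rootLab v = G.rootLab (e v))

end Paper

namespace Paper

/-!
`T` is first run on the outputs of the transitions of `S`: a reversible transducer with the states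
of `T` reads a sequence of transitions and, at each of them, follows `T` through the whole output
word of that transition. It remains to run a reversible transducer `N` on the sequence of
transitions that `S` takes on its input. The head stays on the run of `S`: when `N` moves forward,
`S` makes a step, and when `N` moves backward, a step of `S` is undone, which is possible as `S` is
codeterministic. The state is a pair of a state of `S` and a state of `N`, whence the product of the
numbers of states. The colors of a whole block of transitions are replaced by their minimum.
-/

open Filter

/-! ### Paths and runs of labelled transition systems -/

section LabelledTransitionSystem

variable {X Y : Type*} {R : X → Y → X → Prop}

/-- A finite path of the labelled transition system `R`, with the word of its labels. -/
inductive LPath (R : X → Y → X → Prop) : X → List Y → X → Prop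
  | nil (c : X) : LPath R c [] c
  | cons {c d e : X} {t : Y} {l : List Y} (h : R c t d) (h' : LPath R d l e) :
      LPath R c (t :: l) e

/-- Determinism of a labelled transition system: at most one step, label included, leaves each
configuration. -/
def DetRel (R : X → Y → X → Prop) : Prop :=
  ∀ ⦃c t d t' d'⦄, R c t d → R c t' d' → t = t' ∧ d = d'

/-- A configuration that no step leaves. -/
def Terminal (R : X → Y → X → Prop) (c : X) : Prop :=
  ∀ t d, ¬ R c t d

theorem LPath.single {c d : X} {t : Y} (h : R c t d) : LPath R c [t] d :=
  .cons h (.nil d)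

theorem LPath.append {c d e : X} {l l' : List Y} (h : LPath R c l d) (h' : LPath R d l' e) :
    LPath R c (l ++ l') e := by
  induction h with
  | nil => exact h'
  | cons hs _ ih => exact .cons hs (ih h')

theorem LPath.reverse {c d : X} {l : List Y} (h : LPath R c l d) :
    LPath (fun x t y => R y t x) d l.reverse c := by
  induction h with
  | nil c => exact .nil c
  | cons hs _ ih => simpa only [List.reverse_cons] using ih.append (.single hs)

theorem LPath.map {X' : Type*} {R' : X' → Y → X' → Prop} (F : X → X')
    (hF : ∀ c t d, R c t d → R' (F c) t (F d)) {c d : X} {l : List Y} (h : LPath R c l d) :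
    LPath R' (F c) l (F d) := by
  induction h with
  | nil c => exact .nil _
  | cons hs _ ih => exact .cons (hF _ _ _ hs) ih

theorem LPath.invariant {P : X → Prop} (hP : ∀ c t d, R c t d → P c → P d)
    {c d : X} {l : List Y} (h : LPath R c l d) (hc : P c) : P d := by
  induction h with
  | nil => exact hc
  | cons hs _ ih => exact ih (hP _ _ _ hs hc)

theorem LPath.le_add_length {f : X → ℕ} (hf : ∀ c t d, R c t d → f d ≤ f c + 1) {c d : X}
    {l : List Y} (h : LPath R c l d) : f d ≤ f c + l.length := by
  induction h with
  | nil => exact le_rfl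
  | cons hs _ ih =>
    have := hf _ _ _ hs
    rw [List.length_cons]
    omega

theorem LPath.exists_lpath_of_step (hR : DetRel fun d t c => R c t d) {c d e : X} {l : List Y}
    {t : Y} (hc : Terminal (fun d t c => R c t d) c) (h : LPath R c l e) (hs : R d t e) :
    ∃ l', LPath R c l' d := by
  have hrev := h.reverse
  generalize l.reverse = l₀ at hrev
  obtain _ | ⟨hs', hrest⟩ := hrev
  · exact absurd hs (hc _ _)
  · obtain ⟨-, rfl⟩ := hR hs hs'
    exact ⟨_, hrest.reverse⟩

theorem LPath.det (hR : DetRel R) {c d d' : X} {l l' : List Y} (h : LPath R c l d)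
    (h' : LPath R c l' d') (hd : Terminal R d) (hd' : Terminal R d') : l = l' ∧ d = d' := by
  induction h generalizing l' with
  | nil => cases h' with
    | nil => exact ⟨rfl, rfl⟩
    | cons hs _ => exact absurd hs (hd _ _)
  | cons hs _ ih => cases h' with
    | nil => exact absurd hs (hd' _ _)
    | cons hs' h' =>
      obtain ⟨rfl, rfl⟩ := hR hs hs'
      obtain ⟨rfl, rfl⟩ := ih h' hd
      exact ⟨rfl, rfl⟩

theorem exists_run_of_forall_step {P : X → Prop} (hP : ∀ c, P c → ∃ t d, R c t d ∧ P d)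
    {c : X} (hc : P c) :
    ∃ (cfg : ℕ → X) (tr : ℕ → Y),
      cfg 0 = c ∧ (∀ i, R (cfg i) (tr i) (cfg (i + 1))) ∧ ∀ i, P (cfg i) := by
  choose t d hR hd using hP
  let cfg : ℕ → {c // P c} := fun i => (fun x => ⟨d x.1 x.2, hd x.1 x.2⟩)^[i] ⟨c, hc⟩
  refine ⟨fun i => (cfg i).1, fun i => t (cfg i).1 (cfg i).2, rfl, fun i => ?_,
    fun i => (cfg i).2⟩
  simpa only [cfg, Function.iterate_succ_apply'] using hR (cfg i).1 (cfg i).2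

theorem exists_run_or_lpath_terminal (c : X) :
    (∃ (cfg : ℕ → X) (tr : ℕ → Y), cfg 0 = c ∧ ∀ i, R (cfg i) (tr i) (cfg (i + 1))) ∨
      ∃ l d, LPath R c l d ∧ Terminal R d := by
  refine or_iff_not_imp_right.2 fun h => ?_
  have hstep : ∀ d, (∃ l, LPath R c l d) → ∃ t e, R d t e ∧ ∃ l, LPath R c l e := by
    rintro d ⟨l, hl⟩
    have hd : ¬ Terminal R d := fun hd => h ⟨l, d, hl, hd⟩
    simp only [Terminal, not_forall, not_not] at hd
    obtain ⟨t, e, he⟩ := hd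
    exact ⟨t, e, he, l ++ [t], hl.append (.single he)⟩
  obtain ⟨cfg, tr, h0, hs, -⟩ := exists_run_of_forall_step hstep ⟨[], .nil c⟩
  exact ⟨cfg, tr, h0, hs⟩

theorem exists_run_of_long_lpaths (hR : DetRel R) {c : X}
    (h : ∀ n, ∃ l d, n ≤ l.length ∧ LPath R c l d) :
    ∃ (cfg : ℕ → X) (tr : ℕ → Y), cfg 0 = c ∧ ∀ i, R (cfg i) (tr i) (cfg (i + 1)) := by
  have hstep : ∀ c, (∀ n, ∃ l d, n ≤ l.length ∧ LPath R c l d) →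
      ∃ t d, R c t d ∧ ∀ n, ∃ l e, n ≤ l.length ∧ LPath R d l e := by
    intro c hc
    obtain ⟨_ | ⟨t, l⟩, d, hl, hp⟩ := hc 1
    · simp at hl
    obtain _ | ⟨hs, -⟩ := hp
    refine ⟨_, _, hs, fun n => ?_⟩
    obtain ⟨_ | ⟨t', l'⟩, d', hl', hp'⟩ := hc (n + 1)
    · simp at hl'
    obtain _ | ⟨hs', hp'⟩ := hp'
    obtain ⟨rfl, rfl⟩ := hR hs hs'
    exact ⟨l', d', by simpa using hl', hp'⟩
  obtain ⟨cfg, tr, h0, hs, -⟩ := exists_run_of_forall_step hstep h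
  exact ⟨cfg, tr, h0, hs⟩

theorem lpath_of_run {cfg : ℕ → X} {tr : ℕ → Y} (hs : ∀ i, R (cfg i) (tr i) (cfg (i + 1)))
    (n k : ℕ) : LPath R (cfg n) ((List.range' n k).map tr) (cfg (n + k)) := by
  induction k generalizing n with
  | zero => exact .nil _
  | succ k ih =>
    rw [List.range'_succ, List.map_cons, show n + (k + 1) = n + 1 + k by omega]
    exact .cons (hs n) (ih (n + 1))

theorem DetRel.run_unique (hR : DetRel R) {cfg cfg' : ℕ → X} {tr tr' : ℕ → Y}
    (hs : ∀ i, R (cfg i) (tr i) (cfg (i + 1))) (hs' : ∀ i, R (cfg' i) (tr' i) (cfg' (i + 1)))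
    {n m : ℕ} (h : cfg n = cfg' m) (i : ℕ) :
    cfg (n + i) = cfg' (m + i) ∧ tr (n + i) = tr' (m + i) := by
  have hcfg : cfg (n + i) = cfg' (m + i) := by
    induction i with
    | zero => exact h
    | succ i ih => exact (hR (hs (n + i)) (ih ▸ hs' (m + i))).2
  exact ⟨hcfg, (hR (hs (n + i)) (hcfg ▸ hs' (m + i))).1⟩

theorem LPath.eq_run (hR : DetRel R) {cfg : ℕ → X} {tr : ℕ → Y}
    (hs : ∀ i, R (cfg i) (tr i) (cfg (i + 1))) {n : ℕ} {d : X} {l : List Y}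
    (h : LPath R (cfg n) l d) :
    l = (List.range' n l.length).map tr ∧ d = cfg (n + l.length) := by
  generalize hc : cfg n = c at h
  induction h generalizing n with
  | nil => exact ⟨rfl, hc.symm⟩
  | cons hst _ ih =>
    subst hc
    obtain ⟨rfl, rfl⟩ := hR hst (hs n)
    obtain ⟨hl, hd⟩ := ih rfl
    rw [List.length_cons, List.range'_succ, List.map_cons, ← hl, ← Nat.succ_add_eq_add_succ]
    exact ⟨rfl, hd⟩

/-- A run of a deterministic system that repeats a configuration is periodic from then on. -/
theorem DetRel.finite_range_of_not_injective (hR : DetRel R) {cfg : ℕ → X} {tr : ℕ → Y}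
    (hs : ∀ i, R (cfg i) (tr i) (cfg (i + 1))) (h : ¬ Function.Injective cfg) :
    (Set.range cfg).Finite := by
  obtain ⟨i, j, hij, hne⟩ : ∃ i j, cfg i = cfg j ∧ i < j := by
    simp only [Function.Injective, not_forall] at h
    obtain ⟨i, j, hij, hne⟩ := h
    rcases Nat.lt_or_gt_of_ne hne with hlt | hlt
    exacts [⟨i, j, hij, hlt⟩, ⟨j, i, hij.symm, hlt⟩]
  have hper : Function.Periodic (fun k => cfg (i + k)) (j - i) := fun k => by
    simpa only [show i + (k + (j - i)) = j + k by omega] using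
      (hR.run_unique hs hs hij k).1.symm
  refine ((Set.finite_Iio (i + (j - i))).image cfg).subset ?_
  rintro _ ⟨k, rfl⟩
  rcases lt_or_ge k i with hk | hk
  · exact ⟨k, Set.mem_Iio.2 (by omega), rfl⟩
  · refine ⟨i + (k - i) % (j - i), Set.mem_Iio.2 ?_, ?_⟩
    · have := Nat.mod_lt (k - i) (show j - i > 0 by omega)
      omega
    · simpa only [show i + (k - i) = k by omega] using hper.map_mod_nat (k - i)

end LabelledTransitionSystem

/-! ### Concatenations of sequences of words -/

section Words

variable {C D : Type}

theorem prefixCat_prefix (f : ℕ → List C) {n m : ℕ} (h : n ≤ m) :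
    prefixCat f n <+: prefixCat f m := by
  induction h with
  | refl => exact List.prefix_rfl
  | step _ ih => exact ih.trans (List.prefix_append _ _)

theorem length_prefixCat_mono (f : ℕ → List C) {n m : ℕ} (h : n ≤ m) :
    (prefixCat f n).length ≤ (prefixCat f m).length :=
  (prefixCat_prefix f h).length_le

theorem length_prefixCat_succ (f : ℕ → List C) (n : ℕ) :
    (prefixCat f (n + 1)).length = (prefixCat f n).length + (f n).length :=
  List.length_append

theorem prefixCat_eq_flatMap (f : ℕ → List C) (n : ℕ) :
    prefixCat f n = (List.range n).flatMap f := by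
  induction n with
  | zero => rfl
  | succ n ih => simp [prefixCat, ih, List.range_succ]

theorem isPrefixOf_iff {l : List C} {x : ℕ → C} :
    IsPrefixOf l x ↔ l = (List.range l.length).map x := by
  simp [IsPrefixOf, List.ext_get_iff]

theorem IsPrefixOf.of_prefix {l l' : List C} {x : ℕ → C} (h : IsPrefixOf l' x)
    (hl : l <+: l') : IsPrefixOf l x :=
  fun i hi => (hl.getElem hi).trans (h i (hi.trans_le hl.length_le))

theorem exists_flattenTo {f : ℕ → List C} (h : ∀ m, ∃ n, m ≤ (prefixCat f n).length) :
    ∃ x, FlattenTo f x := by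
  choose N hN using fun m => h (m + 1)
  refine ⟨fun i => (prefixCat f (N i))[i]'(hN i), fun n i hi => ?_, h⟩
  rcases le_total n (N i) with hn | hn
  · exact (prefixCat_prefix f hn).getElem hi
  · exact ((prefixCat_prefix f hn).getElem (hN i)).symm

theorem forall_exists_le_length_prefixCat_iff {f : ℕ → List C} :
    (∀ m, ∃ n, m ≤ (prefixCat f n).length) ↔ ∃ᶠ i in atTop, f i ≠ [] := by
  constructor
  · intro h hev
    simp only [not_not, eventually_atTop] at hev
    obtain ⟨n, hn⟩ := hev
    have hbound : ∀ k, (prefixCat f (n + k)).length = (prefixCat f n).length := fun k => by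
      induction k with
      | zero => rfl
      | succ k ih =>
        rw [← Nat.add_assoc, length_prefixCat_succ, ih, hn _ (Nat.le_add_right n k)]
        rfl
    obtain ⟨k, hk⟩ := h ((prefixCat f n).length + 1)
    have := hk.trans (length_prefixCat_mono f (Nat.le_add_left k n))
    rw [hbound] at this
    omega
  · intro h m
    induction m with
    | zero => exact ⟨0, Nat.zero_le _⟩
    | succ m ih =>
      obtain ⟨n, hn⟩ := ih
      obtain ⟨i, hi, hne⟩ := frequently_atTop.1 h n
      have := length_prefixCat_mono f hi
      have := List.length_pos_of_ne_nil hne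
      exact ⟨i + 1, by rw [length_prefixCat_succ]; omega⟩

theorem FlattenTo.getElem_eq {f : ℕ → List C} {x : ℕ → C} (h : FlattenTo f x) (k i : ℕ)
    (hi : i < (f k).length) : (f k)[i] = x ((prefixCat f k).length + i) := by
  rw [← h.1 (k + 1) _ (by rw [length_prefixCat_succ]; omega)]
  simp [prefixCat]

theorem FlattenTo.exists_block {f : ℕ → List C} {x : ℕ → C} (h : FlattenTo f x) (i : ℕ) :
    ∃ j, ∃ k, ∃ _ : k < (f j).length, i = (prefixCat f j).length + k := by
  obtain ⟨n, hn⟩ := h.2 (i + 1)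
  induction n with
  | zero => simp [prefixCat] at hn
  | succ n ih =>
    rcases lt_or_ge i (prefixCat f n).length with hi | hi
    · exact ih hi
    · rw [length_prefixCat_succ] at hn
      exact ⟨n, i - (prefixCat f n).length, by omega, by omega⟩

theorem flattenTo_flatMap_iff {f : ℕ → List C} {y : ℕ → C} (h : FlattenTo f y)
    {g : C → List D} {x : ℕ → D} :
    FlattenTo (fun j => (f j).flatMap g) x ↔ FlattenTo (fun i => g (y i)) x := by
  have key : ∀ n, prefixCat (fun j => (f j).flatMap g) n =
      prefixCat (fun i => g (y i)) (prefixCat f n).length := fun n => by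
    rw [prefixCat_eq_flatMap, prefixCat_eq_flatMap (fun i => g (y i)), ← List.flatMap_assoc,
      ← prefixCat_eq_flatMap, ← List.flatMap_map y, ← isPrefixOf_iff.1 (h.1 n)]
  refine ⟨fun ⟨h1, h2⟩ => ⟨fun n => ?_, fun m => ?_⟩,
    fun ⟨h1, h2⟩ => ⟨fun n => key n ▸ h1 _, fun m => ?_⟩⟩
  · obtain ⟨k, hk⟩ := h.2 n
    exact (key k ▸ h1 k).of_prefix (prefixCat_prefix _ hk)
  · obtain ⟨n, hn⟩ := h2 m
    exact ⟨_, key n ▸ hn⟩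
  · obtain ⟨n, hn⟩ := h2 m
    obtain ⟨k, hk⟩ := h.2 n
    exact ⟨k, key k ▸ hn.trans (length_prefixCat_mono _ hk)⟩

end Words

/-! ### Recurrence and minimal colors -/

section Recurrence

variable {Y Z : Type}

/-- The sequence of words `L` and the sequence of letters `tr` visit the same properties of
letters infinitely often. -/
def SameRecurrence (L : ℕ → List Y) (tr : ℕ → Y) : Prop :=
  ∀ P : Y → Prop, (∃ᶠ j in atTop, ∃ y ∈ L j, P y) ↔ ∃ᶠ i in atTop, P (tr i)

theorem FlattenTo.sameRecurrence {L : ℕ → List Y} {tr : ℕ → Y} (h : FlattenTo L tr) :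
    SameRecurrence L tr := by
  intro P
  simp only [frequently_atTop]
  constructor
  · intro hP n
    obtain ⟨m, hm⟩ := h.2 n
    obtain ⟨j, hj, y, hy, hPy⟩ := hP m
    obtain ⟨i, hi, rfl⟩ := List.getElem_of_mem hy
    rw [h.getElem_eq] at hPy
    exact ⟨_, (hm.trans (length_prefixCat_mono L hj)).trans (Nat.le_add_right _ i), hPy⟩
  · intro hP n
    obtain ⟨i, hi, hPi⟩ := hP (prefixCat L n).length
    obtain ⟨j, k, hk, rfl⟩ := h.exists_block i
    refine ⟨j, ?_, _, List.getElem_mem hk, h.getElem_eq j k hk ▸ hPi⟩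
    by_contra hjn
    have := length_prefixCat_mono L (show j + 1 ≤ n by omega)
    rw [length_prefixCat_succ] at this
    omega

theorem infOften_iff_frequently {tr : ℕ → Y} {y : Y} :
    InfOften tr y ↔ ∃ᶠ i in atTop, tr i = y :=
  frequently_atTop.symm

/-- The least color in the word `L z`. On the empty word it takes a value that no color in any
of the words `L z'` exceeds, so that such letters are irrelevant for parity conditions. -/
noncomputable def minColor (col : Y → ℕ) (L : Z → List Y) (z : Z) : ℕ :=
  ((L z).map col).foldr min (⨆ z', ((L z').map col).sum)

variable (col : Y → ℕ) (L : Z → List Y)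

theorem minColor_le {z : Z} {y : Y} (hy : y ∈ L z) : minColor col L z ≤ col y := by
  have key : ∀ (l : List Y) (k : ℕ), y ∈ l → (l.map col).foldr min k ≤ col y := by
    intro l k hl
    induction l with
    | nil => simp at hl
    | cons a l ih =>
      rcases List.mem_cons.1 hl with rfl | hl
      · exact min_le_left _ _
      · exact (min_le_right _ _).trans (ih hl)
  exact key _ _ hy

theorem exists_minColor_eq_or_forall_le [Finite Z] (z : Z) :
    (∃ y ∈ L z, col y = minColor col L z) ∨ ∀ z', ∀ y ∈ L z', col y ≤ minColor col L z := by
  have key : ∀ (l : List Y) (k : ℕ),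
      (∃ y ∈ l, col y = (l.map col).foldr min k) ∨ (l.map col).foldr min k = k := by
    intro l k
    induction l with
    | nil => exact .inr rfl
    | cons a l ih =>
      rcases min_choice (col a) ((l.map col).foldr min k) with h | h
      · exact .inl ⟨a, List.mem_cons_self, h.symm⟩
      · simp only [List.map_cons, List.foldr_cons, h]
        exact ih.imp_left fun ⟨y, hy, hc⟩ => ⟨y, List.mem_cons_of_mem a hy, hc⟩
  refine (key _ _).imp_right fun h z' y hy => ?_
  rw [minColor, h]
  exact (List.single_le_sum (fun _ _ => Nat.zero_le _) _ (List.mem_map_of_mem hy)).trans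
    (le_ciSup (f := fun z' => ((L z').map col).sum) (Set.finite_range _).bddAbove z')

variable {L} in
theorem sInf_minColor_eq [Finite Z] {tr : ℕ → Z} {tr' : ℕ → Y}
    (h : SameRecurrence (fun j => L (tr j)) tr') :
    sInf {m | ∃ z, InfOften tr z ∧ minColor col L z = m} =
      sInf {m | ∃ y, InfOften tr' y ∧ col y = m} := by
  have pigeonhole : ∀ P : Y → Prop, (∃ᶠ i in atTop, P (tr' i)) →
      ∃ z, InfOften tr z ∧ ∃ y ∈ L z, P y := fun P hP => by
    obtain ⟨z, hz⟩ := frequently_exists.1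
      (((h P).2 hP).mono fun j hj => (⟨tr j, rfl, hj⟩ : ∃ z, tr j = z ∧ ∃ y ∈ L z, P y))
    exact ⟨z, infOften_iff_frequently.2 (hz.mono fun _ => And.left), hz.exists.choose_spec.2⟩
  have recurs : ∀ {z y}, InfOften tr z → y ∈ L z → InfOften tr' y := fun hz hy =>
    infOften_iff_frequently.2 ((h (· = _)).1
      ((infOften_iff_frequently.1 hz).mono fun _ hj => ⟨_, by simpa only [hj] using hy, rfl⟩))
  refine csInf_eq_csInf_of_forall_exists_le ?_ ?_
  · rintro _ ⟨z, hz, rfl⟩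
    rcases exists_minColor_eq_or_forall_le col L z with ⟨y, hy, hc⟩ | hmax
    · exact ⟨_, ⟨y, recurs hz hy, rfl⟩, hc.le⟩
    · obtain ⟨z', hz', y, hy, -⟩ := pigeonhole (fun _ => True) (.of_forall fun _ => trivial)
      exact ⟨_, ⟨y, recurs hz' hy, rfl⟩, hmax z' y hy⟩
  · rintro _ ⟨y, hy, rfl⟩
    obtain ⟨z, hz, _, hyz, rfl⟩ := pigeonhole (· = y) (infOften_iff_frequently.1 hy)
    exact ⟨_, ⟨z, hz, rfl⟩, minColor_le col L hyz⟩

end Recurrence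

/-! ### Two-way automata on tapes -/

section Tape

variable {A : Type}

/-- The type of potential transitions of a two-way automaton. -/
abbrev TwoWayAut.Trans (M : TwoWayAut A) : Type :=
  M.Q × Option A × M.Q

namespace TwoWayAut

variable (M : TwoWayAut A)

open Classical in
/-- The choice between `x` and `y` made by the direction of the state `p`: `x` if `p` is forward
and `y` if it is backward. -/
noncomputable def side {X : Type*} (p : M.Q) (x y : X) : X :=
  if M.fwd p then x else y

variable {M} {p : M.Q}

theorem side_of_fwd {X : Type*} (hp : M.fwd p) (x y : X) : M.side p x y = x :=
  if_pos hp

theorem side_of_not_fwd {X : Type*} (hp : ¬ M.fwd p) (x y : X) : M.side p x y = y :=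
  if_neg hp

theorem map_side {X Z : Type*} (f : X → Z) (p : M.Q) (x y : X) :
    f (M.side p x y) = M.side p (f x) (f y) := by
  unfold side
  split_ifs <;> rfl

theorem side_self {X : Type*} (p : M.Q) (x : X) : M.side p x x = x :=
  (em (M.fwd p)).elim (side_of_fwd · x x) (side_of_not_fwd · x x)

variable (M)

/-- The configuration from which the transition `t` reads cell `e`. A configuration is a state
together with a gap between cells, gap `g` lying between the cells `g - 1` and `g`; forward
states read the cell to the right of their gap and backward states the cell to its left. -/
noncomputable def source (e : ℕ) (t : M.Trans) : M.Q × ℕ :=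
  (t.1, M.side t.1 e (e + 1))

/-- The configuration in which the transition `t` leaves the head after reading cell `e`. -/
noncomputable def target (e : ℕ) (t : M.Trans) : M.Q × ℕ :=
  (t.2.2, M.side t.2.2 (e + 1) e)

/-- One step of `M` on the tape `v`, whose cell `e` holds the letter or end-marker `v e` and is
absent when `v e = none`. -/
def TapeStep (v : ℕ → Option (Option A)) (c : M.Q × ℕ) (t : M.Trans) (d : M.Q × ℕ) : Prop :=
  t ∈ M.Δ ∧ ∃ e, v e = some t.2.1 ∧ c = M.source e t ∧ d = M.target e t

variable {M}

theorem source_inj {e e' : ℕ} {t t' : M.Trans} (h : M.source e t = M.source e' t') :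
    t.1 = t'.1 ∧ e = e' := by
  obtain ⟨hp, hg⟩ := Prod.mk.inj h
  rw [← hp] at hg
  unfold side at hg
  exact ⟨hp, by split_ifs at hg <;> omega⟩

theorem target_inj {e e' : ℕ} {t t' : M.Trans} (h : M.target e t = M.target e' t') :
    t.2.2 = t'.2.2 ∧ e = e' := by
  obtain ⟨hp, hg⟩ := Prod.mk.inj h
  rw [← hp] at hg
  unfold side at hg
  exact ⟨hp, by split_ifs at hg <;> omega⟩

theorem le_source (e : ℕ) (t : M.Trans) : e ≤ (M.source e t).2 := by
  unfold source side
  split_ifs <;> simp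

theorem source_le (e : ℕ) (t : M.Trans) : (M.source e t).2 ≤ e + 1 := by
  unfold source side
  split_ifs <;> simp

theorem le_target (e : ℕ) (t : M.Trans) : e ≤ (M.target e t).2 := by
  unfold target side
  split_ifs <;> simp

theorem target_le (e : ℕ) (t : M.Trans) : (M.target e t).2 ≤ e + 1 := by
  unfold target side
  split_ifs <;> simp

theorem detRel_tapeStep (hM : Deterministic M) (v : ℕ → Option (Option A)) :
    DetRel (M.TapeStep v) := by
  rintro _ ⟨p, a, q⟩ _ ⟨p', a', q'⟩ _ ⟨ht, e, hv, rfl, rfl⟩ ⟨ht', e', hv', hs, rfl⟩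
  obtain ⟨rfl, rfl⟩ : p = p' ∧ e = e' := source_inj hs
  obtain rfl : a = a' := Option.some_injective _ (hv.symm.trans hv')
  obtain rfl := hM _ _ _ _ ht ht'
  exact ⟨rfl, rfl⟩

theorem detRel_tapeStep_swap (hM : Codeterministic M) (v : ℕ → Option (Option A)) :
    DetRel fun d t c => M.TapeStep v c t d := by
  rintro _ ⟨p, a, q⟩ _ ⟨p', a', q'⟩ _ ⟨ht, e, hv, rfl, rfl⟩ ⟨ht', e', hv', rfl, hs⟩
  obtain ⟨rfl, rfl⟩ : q = q' ∧ e = e' := target_inj hs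
  obtain rfl : a = a' := Option.some_injective _ (hv.symm.trans hv')
  obtain rfl := hM _ _ _ _ ht ht'
  exact ⟨rfl, rfl⟩

theorem TapeStep.shift {v v' : ℕ → Option (Option A)} {o : ℕ}
    (hv : ∀ e a, v e = some a → v' (o + e) = some a) {c d : M.Q × ℕ} {t : M.Trans}
    (h : M.TapeStep v c t d) : M.TapeStep v' (c.1, o + c.2) t (d.1, o + d.2) := by
  obtain ⟨ht, e, he, rfl, rfl⟩ := h
  exact ⟨ht, o + e, hv _ _ he, Prod.ext rfl (map_side (o + ·) _ _ _),
    Prod.ext rfl (map_side (o + ·) _ _ _)⟩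

theorem TapeStep.gap_le_succ {v : ℕ → Option (Option A)} {c d : M.Q × ℕ} {t : M.Trans}
    (h : M.TapeStep v c t d) : d.2 ≤ c.2 + 1 := by
  obtain ⟨-, e, -, rfl, rfl⟩ := h
  exact (target_le e t).trans (Nat.add_le_add_right (le_source e t) 1)

end TwoWayAut

/-- The input `⊢w`: the end-marker in cell `0` and the letter `w i` in cell `i + 1`. -/
def marked (w : ℕ → A) : ℕ → Option A
  | 0 => none
  | i + 1 => some (w i)

/-- The tape holding `⊢w`, all of whose cells are present. -/
def tape (w : ℕ → A) (e : ℕ) : Option (Option A) :=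
  some (marked w e)

namespace TwoWayAut

variable {M : TwoWayAut A} {w : ℕ → A} {cfg : ℕ → M.Q × ℕ} {tr : ℕ → M.Trans}

theorem TapeStep.one_le_gap {c d : M.Q × ℕ} {t : M.Trans} (h : M.TapeStep (tape w) c t d) :
    1 ≤ d.2 := by
  obtain ⟨ht, e, he, rfl, rfl⟩ := h
  obtain ⟨p, a, q⟩ := t
  cases e with
  | succ e => exact (Nat.le_add_left 1 e).trans (le_target _ _)
  | zero =>
    obtain rfl : none = a := Option.some_injective _ he
    exact (side_of_fwd (M.marker p q ht).2 1 0).ge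

theorem stepVia_iff {p q : M.Q} {n m : ℕ} {t : M.Trans} :
    StepVia M w (p, n) t (q, m) ↔ M.TapeStep (tape w) (p, n + 1) t (q, m + 1) := by
  obtain ⟨p', a, q'⟩ := t
  constructor
  · rintro ⟨ht, rfl, rfl, h⟩
    dsimp only at h
    rcases h with ⟨hp, rfl, h⟩ | ⟨hp, hn, rfl, h⟩ | ⟨hp, rfl, rfl, rfl⟩
    · refine ⟨ht, n + 1, rfl, by simp [source, side, hp], ?_⟩
      rcases h with ⟨hq, rfl⟩ | ⟨hq, rfl⟩ <;> simp [target, side, hq]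
    · obtain ⟨n, rfl⟩ := Nat.exists_eq_add_of_le' hn
      refine ⟨ht, n + 1, rfl, by simp [source, side, hp], ?_⟩
      rcases h with ⟨hq, rfl⟩ | ⟨hq, rfl⟩ <;> simp [target, side, hq]
    · refine ⟨ht, 0, rfl, by simp [source, side, hp], ?_⟩
      simp [target, side, (M.marker _ _ ht).2]
  · rintro ⟨ht, e, he, hs, hd⟩
    obtain ⟨rfl, hn⟩ := Prod.mk.inj hs
    obtain ⟨rfl, hm⟩ := Prod.mk.inj hd
    obtain rfl : marked w e = a := Option.some_injective _ he
    refine ⟨ht, rfl, rfl, ?_⟩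
    cases e with
    | zero =>
      have := M.marker _ _ ht
      simp_all [side, marked]
    | succ e => by_cases hp : M.fwd p <;> by_cases hq : M.fwd q <;> simp_all [side, marked]

variable (M w cfg tr) in
/-- An infinite run of `M` on `w`, in gap coordinates: the run starts to the right of the
end-marker. -/
structure TapeRun : Prop where
  start : cfg 0 = (M.init, 1)
  step : ∀ i, M.TapeStep (tape w) (cfg i) (tr i) (cfg (i + 1))

variable (M w cfg tr) in
/-- An infinite run of `M` on `w` that reads the whole word. -/
structure FullRun : Prop extends M.TapeRun w cfg tr where
  unbounded : ∀ n, ∃ i, n ≤ (cfg i).2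

theorem TapeRun.one_le_gap (h : M.TapeRun w cfg tr) (i : ℕ) : 1 ≤ (cfg i).2 := by
  cases i with
  | zero => rw [h.start]
  | succ i => exact (h.step i).one_le_gap

theorem fullRun_iff :
    M.FullRun w cfg tr ↔ ∃ cfg', (∀ i, cfg i = ((cfg' i).1, (cfg' i).2 + 1)) ∧
      IsRun M w cfg' tr ∧ ReadsWhole M cfg' := by
  constructor
  · intro h
    have hcfg : ∀ i, cfg i = ((cfg i).1, (cfg i).2 - 1 + 1) := fun i =>
      Prod.ext rfl (Nat.sub_add_cancel (h.one_le_gap i)).symm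
    refine ⟨fun i => ((cfg i).1, (cfg i).2 - 1), hcfg, ⟨by simp only [h.start], fun i => ?_⟩,
      fun n => (h.unbounded (n + 1)).imp fun i hi => Nat.le_sub_of_add_le hi⟩
    rw [stepVia_iff, ← hcfg, ← hcfg]
    exact h.step i
  · rintro ⟨cfg', hcfg, ⟨h0, hs⟩, hu⟩
    refine ⟨⟨by rw [hcfg, h0], fun i => ?_⟩, fun n => (hu n).imp fun i hi => ?_⟩
    · rw [hcfg, hcfg]
      exact stepVia_iff.1 (hs i)
    · rw [hcfg]
      exact hi.trans (Nat.le_succ _)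

theorem tendsto_gap_of_injective (h : Function.Injective cfg) :
    Tendsto (fun i => (cfg i).2) atTop atTop := by
  rw [← Nat.cofinite_eq_atTop]
  have hsnd : Tendsto (Prod.snd : M.Q × ℕ → ℕ) cofinite cofinite :=
    .cofinite_of_finite_preimage_singleton fun n =>
      (Set.finite_univ.prod (Set.finite_singleton n)).subset fun c hc => ⟨trivial, hc⟩
  exact hsnd.comp h.tendsto_cofinite

theorem FullRun.injective (hM : Deterministic M) (h : M.FullRun w cfg tr) :
    Function.Injective cfg := by
  by_contra hinj
  have hfin := (detRel_tapeStep hM _).finite_range_of_not_injective h.step hinj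
  obtain ⟨b, hb⟩ := (hfin.image Prod.snd).bddAbove
  obtain ⟨i, hi⟩ := h.unbounded (b + 1)
  exact absurd (hb ⟨_, ⟨i, rfl⟩, rfl⟩) (Nat.not_le_of_lt hi)

theorem TapeRun.fullRun (h : M.TapeRun w cfg tr) (hinj : Function.Injective cfg) :
    M.FullRun w cfg tr :=
  ⟨h, fun n => ((tendsto_gap_of_injective hinj).eventually_ge_atTop n).exists⟩

theorem FullRun.exists_source (h : M.FullRun w cfg tr) (i : ℕ) :
    ∃ j, cfg j = M.source (i + 1) (tr j) ∧ (tr j).2.1 = some (w i) := by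
  classical
  have hex := h.unbounded (i + 2)
  obtain ⟨j, hj⟩ : ∃ j, Nat.find hex = j + 1 := Nat.exists_eq_add_one.2 <|
    (Nat.find_pos hex).2 (by simp [h.start])
  have hafter := Nat.find_spec hex
  have hbefore := Nat.find_min hex (m := j) (by omega)
  obtain ⟨-, e, he, hsrc, htgt⟩ := h.step j
  have h1 := le_source e (tr j)
  have h2 := target_le e (tr j)
  rw [hj, htgt] at hafter
  rw [hsrc] at hbefore
  obtain rfl : e = i + 1 := by omega
  exact ⟨j, hsrc, (Option.some_injective _ he).symm⟩

theorem FullRun.sameRecurrence (hM : Deterministic M) (h : M.FullRun w cfg tr) :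
    SameRecurrence (fun j => (tr j).2.1.toList) w := by
  intro P
  simp only [Option.mem_toList]
  constructor
  · intro hP
    refine frequently_atTop.2 fun n => ?_
    obtain ⟨j, ⟨a, ha, hPa⟩, hj⟩ := (hP.and_eventually
      ((tendsto_gap_of_injective (h.injective hM)).eventually_ge_atTop (n + 2))).exists
    obtain ⟨-, _ | i, he, hsrc, -⟩ := h.step j
    · simp [tape, marked, ha] at he
    · obtain rfl : w i = a := by simpa [tape, marked, ha] using he
      have := source_le (i + 1) (tr j)
      rw [hsrc] at hj
      exact ⟨i, by omega, hPa⟩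
  · intro hP
    choose τ hτ hletter using h.exists_source
    have hinj : Function.Injective τ := fun i i' hi => by
      have := hτ i
      rw [hi, hτ i'] at this
      exact (Nat.succ.inj (source_inj this).2).symm
    exact hinj.nat_tendsto_atTop.frequently (hP.mono fun i hi => ⟨_, hletter i, hi⟩)

end TwoWayAut

theorem TwoWayTrans.realizes_iff {B : Type} {T : TwoWayTrans A B} {w : ℕ → A} {x : ℕ → B} :
    T.Realizes w x ↔ ∃ cfg tr, T.FullRun w cfg tr ∧ ParityCond T.toParityAut tr ∧
      FlattenTo (fun i => T.out (tr i)) x := by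
  constructor
  · rintro ⟨cfg, tr, hrun, hread, h⟩
    exact ⟨_, tr, TwoWayAut.fullRun_iff.2 ⟨cfg, fun _ => rfl, hrun, hread⟩, h⟩
  · rintro ⟨cfg, tr, hfull, h⟩
    obtain ⟨cfg', -, hrun, hread⟩ := TwoWayAut.fullRun_iff.1 hfull
    exact ⟨cfg', tr, hrun, hread, h⟩

end Tape

/-! ### Precomposition with a letter-to-word substitution -/

section Pullback

variable {B C Γ : Type}

/-- The block of cells that a letter of `⊢w`, or its end-marker, contributes to the tape of the
image of `w` under the substitution `h`. -/
def block (h : C → List B) : Option C → List (Option B)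
  | none => [none]
  | some c => (h c).map some

/-- The position at which the block of cell `g` of `⊢w` starts. -/
def offset (h : C → List B) (w : ℕ → C) (g : ℕ) : ℕ :=
  (prefixCat (fun i => block h (marked w i)) g).length

theorem offset_succ (h : C → List B) (w : ℕ → C) (g : ℕ) :
    offset h w (g + 1) = offset h w g + (block h (marked w g)).length :=
  length_prefixCat_succ _ _

theorem flattenTo_block {h : C → List B} {w : ℕ → C} {y : ℕ → B}
    (hy : FlattenTo (fun i => h (w i)) y) :
    FlattenTo (fun i => block h (marked w i)) (marked y) := by
  have hcat : ∀ n, prefixCat (fun i => block h (marked w i)) (n + 1) =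
      none :: (prefixCat (fun i => h (w i)) n).map some := fun n => by
    induction n with
    | zero => rfl
    | succ n ih => rw [prefixCat, ih]; simp [prefixCat, block, marked]
  refine ⟨fun n => ?_, fun m => ?_⟩
  · refine IsPrefixOf.of_prefix ?_ (prefixCat_prefix _ (Nat.le_succ n))
    rw [hcat, isPrefixOf_iff, isPrefixOf_iff.1 (hy.1 n)]
    simp [List.range_succ_eq_map, marked]
  · obtain ⟨n, hn⟩ := hy.2 m
    exact ⟨n + 1, by rw [hcat]; simp; omega⟩

namespace TwoWayAut

variable (M : TwoWayAut B)

/-- The word `π` of transitions is the passage of `M` through the factor `l` of its tape, from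
entering it in the state `p` to leaving it in the state `p'`; the directions of these states
determine the ends of `l` at which this happens. -/
def Traverses (l : List (Option B)) (p : M.Q) (π : List M.Trans) (p' : M.Q) : Prop :=
  LPath (M.TapeStep (l[·]?)) (p, M.side p 0 l.length) π (p', M.side p' l.length 0)

/-- The passage of `M` through the block `block h t.2.1` from `t.1` to `t.2.2`, when there is
one. -/
noncomputable def blockPath (h : C → List B) (t : M.Q × Option C × M.Q) : List M.Trans :=
  Classical.epsilon fun π => M.Traverses (block h t.2.1) t.1 π t.2.2

variable {M} {l : List (Option B)}

theorem terminal_exit (p : M.Q) :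
    Terminal (M.TapeStep (l[·]?)) (p, M.side p l.length 0) := by
  rintro t _ ⟨-, e, he, hs, -⟩
  obtain ⟨rfl, hg⟩ := Prod.mk.inj hs
  have := (List.getElem?_eq_some_iff.1 he).1
  unfold side at hg
  split_ifs at hg
  all_goals omega

theorem terminal_swap_entry (p : M.Q) :
    Terminal (fun d t c => M.TapeStep (l[·]?) c t d) (p, M.side p 0 l.length) := by
  rintro t _ ⟨-, e, he, -, ht⟩
  obtain ⟨rfl, hg⟩ := Prod.mk.inj ht
  have := (List.getElem?_eq_some_iff.1 he).1
  unfold side at hg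
  split_ifs at hg
  all_goals omega

theorem Traverses.det (hM : Deterministic M) {p q q' : M.Q} {π π' : List M.Trans}
    (h : M.Traverses l p π q) (h' : M.Traverses l p π' q') : q = q' :=
  congrArg Prod.fst (LPath.det (detRel_tapeStep hM _) h h' (terminal_exit q) (terminal_exit q')).2

theorem Traverses.codet (hM : Codeterministic M) {p p' q : M.Q} {π π' : List M.Trans}
    (h : M.Traverses l p π q) (h' : M.Traverses l p' π' q) : p = p' :=
  congrArg Prod.fst (LPath.det (detRel_tapeStep_swap hM _) (LPath.reverse h) (LPath.reverse h')
    (terminal_swap_entry p) (terminal_swap_entry p')).2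

theorem Traverses.marker {p q : M.Q} {π : List M.Trans} (h : M.Traverses [none] p π q) :
    ¬ M.fwd p ∧ M.fwd q := by
  have marker_of_step : ∀ {c t d}, M.TapeStep ([(none : Option B)][·]?) c t d →
      ¬ M.fwd c.1 ∧ M.fwd d.1 := by
    rintro _ ⟨p, a, q⟩ _ ⟨ht, e, he, rfl, rfl⟩
    obtain ⟨-, rfl⟩ : e = 0 ∧ none = a := by
      simpa [List.getElem?_singleton] using he
    exact M.marker p q ht
  unfold Traverses at h
  generalize hd : (q, M.side q [(none : Option B)].length 0) = d at h
  obtain _ | ⟨hs, _ | ⟨hs', -⟩⟩ := h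
  · obtain ⟨rfl, hg⟩ := Prod.mk.inj hd
    unfold side at hg
    split_ifs at hg
  · obtain rfl := hd
    exact marker_of_step hs
  · exact absurd (marker_of_step hs).2 (marker_of_step hs').1

theorem Traverses.eq_of_nil {p q : M.Q} (h : M.Traverses l p [] q) : q = p := by
  unfold Traverses at h
  generalize hd : (q, M.side q l.length 0) = d at h
  cases h
  exact congrArg Prod.fst hd

theorem traverses_nil {p q : M.Q} {π : List M.Trans} (h : M.Traverses [] p π q) : π = [] := by
  unfold Traverses at h
  generalize hd : (q, M.side q ([] : List (Option B)).length 0) = d at h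
  obtain _ | ⟨⟨-, e, he, -⟩, -⟩ := h
  · rfl
  · simp at he

end TwoWayAut

/-- The transducer that maps `w` to the image under `T` of the concatenation of the words
`h (w i)`. One of its transitions performs the whole passage of `T` through a block. -/
noncomputable def TwoWayTrans.pullback (T : TwoWayTrans B Γ) (h : C → List B) :
    TwoWayTrans C Γ where
  Q := T.Q
  finQ := T.finQ
  fwd := T.fwd
  init := T.init
  init_fwd := T.init_fwd
  Δ := {t | ∃ π, T.Traverses (block h t.2.1) t.1 π t.2.2}
  marker _ _ := fun ⟨_, hπ⟩ => hπ.marker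
  CIdx := T.CIdx
  finC := T.finC
  color c := minColor (T.color c) (T.blockPath h)
  out t := (T.blockPath h t).flatMap T.out

variable {T : TwoWayTrans B Γ} {h : C → List B}

theorem reversible_pullback (hT : Reversible T.toTwoWayAut) :
    Reversible (T.pullback h).toTwoWayAut :=
  ⟨fun _ _ _ _ ⟨_, hπ⟩ ⟨_, hπ'⟩ => hπ.det hT.1 hπ',
    fun _ _ _ _ ⟨_, hπ⟩ ⟨_, hπ'⟩ => hπ.codet hT.2 hπ'⟩

theorem traverses_blockPath {t : (T.pullback h).Trans} (ht : t ∈ (T.pullback h).Δ) :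
    T.Traverses (block h t.2.1) t.1 (T.blockPath h t) t.2.2 :=
  Classical.epsilon_spec ht

variable {w : ℕ → C} {y : ℕ → B}

/-- The configuration of `T` on the image word that corresponds to the configuration `c` of
`T.pullback h`. -/
def expand (T : TwoWayTrans B Γ) (h : C → List B) (w : ℕ → C) (c : T.Q × ℕ) : T.Q × ℕ :=
  (c.1, offset h w c.2)

theorem expand_source (e : ℕ) (t : (T.pullback h).Trans) :
    expand T h w ((T.pullback h).source e t) =
      (t.1, offset h w e + T.side t.1 0 (block h (marked w e)).length) := by
  have := TwoWayAut.map_side (M := T.toTwoWayAut) (offset h w) t.1 e (e + 1)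
  rw [offset_succ] at this
  exact Prod.ext rfl (this.trans (TwoWayAut.map_side (offset h w e + ·) t.1 0 _).symm)

theorem expand_target (e : ℕ) (t : (T.pullback h).Trans) :
    expand T h w ((T.pullback h).target e t) =
      (t.2.2, offset h w e + T.side t.2.2 (block h (marked w e)).length 0) := by
  have := TwoWayAut.map_side (M := T.toTwoWayAut) (offset h w) t.2.2 (e + 1) e
  rw [offset_succ] at this
  exact Prod.ext rfl (this.trans (TwoWayAut.map_side (offset h w e + ·) t.2.2 _ 0).symm)

theorem tape_offset_add (hy : FlattenTo (fun i => h (w i)) y) (e i : ℕ) (a : Option B)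
    (ha : (block h (marked w e))[i]? = some a) : tape y (offset h w e + i) = some a := by
  obtain ⟨hi, rfl⟩ := List.getElem?_eq_some_iff.1 ha
  exact congrArg some ((flattenTo_block hy).getElem_eq e i hi).symm

theorem lpath_blockPath (hy : FlattenTo (fun i => h (w i)) y) {c d : T.Q × ℕ}
    {t : (T.pullback h).Trans} (hs : (T.pullback h).TapeStep (tape w) c t d) :
    LPath (T.TapeStep (tape y)) (expand T h w c) (T.blockPath h t) (expand T h w d) := by
  obtain ⟨ht, e, he, rfl, rfl⟩ := hs
  have hpath := traverses_blockPath ht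
  rw [← Option.some_injective _ he] at hpath
  rw [expand_source, expand_target]
  exact LPath.map (fun c => (c.1, offset h w e + c.2))
    (fun _ _ _ hs => hs.shift (tape_offset_add hy e)) hpath

variable {cfg : ℕ → T.Q × ℕ} {tr : ℕ → T.Trans} {cfg' : ℕ → T.Q × ℕ}
  {tr' : ℕ → (T.pullback h).Trans}

theorem lpath_prefixCat_blockPath (hy : FlattenTo (fun i => h (w i)) y)
    (hrun' : (T.pullback h).TapeRun w cfg' tr') (n : ℕ) :
    LPath (T.TapeStep (tape y)) (T.init, 1) (prefixCat (fun j => T.blockPath h (tr' j)) n)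
      (expand T h w (cfg' n)) := by
  induction n with
  | zero => rw [hrun'.start]; exact .nil _
  | succ n ih => exact ih.append (lpath_blockPath hy (hrun'.step n))

theorem prefixCat_blockPath_eq_run (hT : Deterministic T.toTwoWayAut)
    (hy : FlattenTo (fun i => h (w i)) y) (hrun : T.TapeRun y cfg tr)
    (hrun' : (T.pullback h).TapeRun w cfg' tr') (n : ℕ) :
    IsPrefixOf (prefixCat (fun j => T.blockPath h (tr' j)) n) tr ∧
      expand T h w (cfg' n) = cfg (prefixCat (fun j => T.blockPath h (tr' j)) n).length := by
  have hpath := lpath_prefixCat_blockPath hy hrun' n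
  rw [← hrun.start] at hpath
  obtain ⟨hl, hd⟩ := hpath.eq_run (TwoWayAut.detRel_tapeStep hT _) hrun.step
  rw [← List.range_eq_range'] at hl
  rw [Nat.zero_add] at hd
  exact ⟨isPrefixOf_iff.2 hl, hd⟩

theorem exists_le_offset_gap (hy : FlattenTo (fun i => h (w i)) y)
    (hrun' : (T.pullback h).FullRun w cfg' tr') (m : ℕ) : ∃ n, m ≤ offset h w (cfg' n).2 := by
  obtain ⟨g, hg⟩ := (flattenTo_block hy).2 m
  obtain ⟨n, hn⟩ := hrun'.unbounded g
  exact ⟨n, hg.trans (length_prefixCat_mono _ hn)⟩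

theorem exists_le_length_prefixCat_blockPath (hy : FlattenTo (fun i => h (w i)) y)
    (hrun' : (T.pullback h).FullRun w cfg' tr') (m : ℕ) :
    ∃ n, m ≤ (prefixCat (fun j => T.blockPath h (tr' j)) n).length := by
  obtain ⟨n, hn⟩ := exists_le_offset_gap hy hrun' (m + 1)
  have hle := LPath.le_add_length (f := Prod.snd)
    (fun _ _ _ => TwoWayAut.TapeStep.gap_le_succ) (lpath_prefixCat_blockPath hy hrun'.toTapeRun n)
  refine ⟨n, ?_⟩
  simp only [expand] at hle
  omega

theorem flattenTo_blockPath (hT : Deterministic T.toTwoWayAut)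
    (hy : FlattenTo (fun i => h (w i)) y) (hrun : T.TapeRun y cfg tr)
    (hrun' : (T.pullback h).FullRun w cfg' tr') :
    FlattenTo (fun j => T.blockPath h (tr' j)) tr :=
  ⟨fun n => (prefixCat_blockPath_eq_run hT hy hrun hrun'.toTapeRun n).1,
    exists_le_length_prefixCat_blockPath hy hrun'⟩

theorem exists_fullRun_of_pullback (hT : Deterministic T.toTwoWayAut)
    (hy : FlattenTo (fun i => h (w i)) y) (hrun' : (T.pullback h).FullRun w cfg' tr') :
    ∃ cfg tr, T.FullRun y cfg tr := by
  obtain ⟨cfg, tr, h0, hs⟩ := exists_run_of_long_lpaths (TwoWayAut.detRel_tapeStep hT (tape y))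
    fun m => (exists_le_length_prefixCat_blockPath hy hrun' m).elim fun n hn =>
      ⟨_, _, hn, lpath_prefixCat_blockPath hy hrun'.toTapeRun n⟩
  refine ⟨cfg, tr, ⟨h0, hs⟩, fun m => ?_⟩
  obtain ⟨n, hn⟩ := exists_le_offset_gap hy hrun' m
  exact ⟨_, hn.trans_eq
    (congrArg Prod.snd (prefixCat_blockPath_eq_run hT hy ⟨h0, hs⟩ hrun'.toTapeRun n).2)⟩

namespace TwoWayAut

variable {M : TwoWayAut B} {l : List (Option B)} {v : ℕ → Option (Option B)} {o : ℕ}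

theorem gap_le_length {c d : M.Q × ℕ} {t : M.Trans} (hs : M.TapeStep (l[·]?) c t d) :
    d.2 ≤ l.length := by
  obtain ⟨-, e, he, -, rfl⟩ := hs
  exact (target_le e t).trans (List.getElem?_eq_some_iff.1 he).1

theorem eq_exit_of_terminal (hv : ∀ i a, l[i]? = some a → v (o + i) = some a)
    {q : M.Q} {k : ℕ} (hk : k ≤ l.length) (hterm : Terminal (M.TapeStep (l[·]?)) (q, k))
    {t : M.Trans} {d : M.Q × ℕ} (hs : M.TapeStep v (q, o + k) t d) :
    k = M.side q l.length 0 := by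
  obtain ⟨ht, e, he, hsrc, -⟩ := hs
  obtain ⟨rfl, hg⟩ := Prod.mk.inj hsrc
  have not_inside : ∀ i, i < l.length → e = o + i → k ≠ M.side t.1 i (i + 1) := by
    rintro i hi rfl rfl
    rw [hv i _ (List.getElem?_eq_getElem hi)] at he
    exact hterm t _ ⟨ht, i, (List.getElem?_eq_getElem hi).trans he, rfl, rfl⟩
  by_cases hq : M.fwd t.1
  · simp only [side_of_fwd hq] at hg not_inside ⊢
    by_contra hne
    exact not_inside k (by omega) hg.symm rfl
  · simp only [side_of_not_fwd hq] at hg not_inside ⊢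
    by_contra hne
    exact not_inside (k - 1) (by omega) (by omega) (by omega)

theorem FullRun.exists_traverses (hM : Deterministic M) {y : ℕ → B} {cfg : ℕ → M.Q × ℕ}
    {tr : ℕ → M.Trans} (hrun : M.FullRun y cfg tr)
    (hl : ∀ i a, l[i]? = some a → tape y (o + i) = some a) {n : ℕ} {p : M.Q}
    (hn : cfg n = (p, o + M.side p 0 l.length)) :
    ∃ π q m, M.Traverses l p π q ∧ cfg m = (q, o + M.side q l.length 0) := by
  have hdet := detRel_tapeStep hM (tape y)
  rcases exists_run_or_lpath_terminal (R := M.TapeStep (l[·]?)) (p, M.side p 0 l.length) with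
    ⟨cfg', tr', h0, hs⟩ | ⟨π, ⟨q, k⟩, hπ, hterm⟩
  · have hle : ∀ i, (cfg (n + (i + 1))).2 ≤ o + l.length := fun i => by
      have hstart : cfg n = ((cfg' 0).1, o + (cfg' 0).2) := by rw [hn, h0]
      rw [(hdet.run_unique (cfg' := fun i => ((cfg' i).1, o + (cfg' i).2)) (m := 0) hrun.step
        (fun i => (hs i).shift hl) hstart (i + 1)).1, Nat.zero_add]
      exact Nat.add_le_add_left (gap_le_length (hs i)) o
    obtain ⟨j, hj, hnj⟩ := ((tendsto_gap_of_injective (hrun.injective hM)).eventually_gt_atTop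
      (o + l.length) |>.and (eventually_gt_atTop n)).exists
    obtain ⟨i, rfl⟩ := Nat.exists_eq_add_of_lt hnj
    exact absurd (hle i) (Nat.not_le_of_lt hj)
  · have hk : k ≤ l.length := LPath.invariant (P := fun c => c.2 ≤ l.length)
      (fun _ _ _ hs _ => gap_le_length hs) hπ (by unfold side; split_ifs <;> simp)
    have hπ' := LPath.map (fun c => (c.1, o + c.2)) (fun _ _ _ hs => hs.shift hl) hπ
    rw [← hn] at hπ'
    have hend := (hπ'.eq_run hdet hrun.step).2
    obtain rfl := eq_exit_of_terminal hl hk hterm (hend ▸ hrun.step _)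
    exact ⟨π, q, _, hπ, hend.symm⟩

end TwoWayAut

theorem exists_step_pullback (hT : Deterministic T.toTwoWayAut)
    (hy : FlattenTo (fun i => h (w i)) y) (hrun : T.FullRun y cfg tr) {c : T.Q × ℕ} {n : ℕ}
    (hc : 1 ≤ c.2) (hn : cfg n = expand T h w c) :
    ∃ t d, (T.pullback h).TapeStep (tape w) c t d ∧ ∃ m, cfg m = expand T h w d := by
  obtain ⟨p, g⟩ := c
  obtain ⟨e, hg⟩ : ∃ e, g = T.side p e (e + 1) := by
    by_cases hp : T.fwd p
    · exact ⟨g, (TwoWayAut.side_of_fwd hp _ _).symm⟩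
    · exact ⟨g - 1, by rw [TwoWayAut.side_of_not_fwd hp]; exact (Nat.sub_add_cancel hc).symm⟩
  have hsrc : ∀ a q, (p, g) = (T.pullback h).source e (p, a, q) := fun _ _ => Prod.ext rfl hg
  rw [hsrc none p, expand_source] at hn
  obtain ⟨π, q, m, hπ, hm⟩ := hrun.exists_traverses hT (tape_offset_add hy e) hn
  let t : (T.pullback h).Trans := (p, marked w e, q)
  exact ⟨t, _, ⟨⟨π, hπ⟩, e, rfl, hsrc _ _, rfl⟩, m, hm.trans (expand_target e t).symm⟩

theorem exists_tapeRun_pullback (hT : Deterministic T.toTwoWayAut)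
    (hy : FlattenTo (fun i => h (w i)) y) (hrun : T.FullRun y cfg tr) :
    ∃ cfg' tr', (T.pullback h).TapeRun w cfg' tr' := by
  obtain ⟨cfg', tr', h0, hs, -⟩ := exists_run_of_forall_step
    (R := (T.pullback h).TapeStep (tape w))
    (P := fun c => 1 ≤ c.2 ∧ ∃ n, cfg n = expand T h w c) (c := (T.init, 1))
    (fun c ⟨hc, n, hn⟩ => by
      obtain ⟨t, d, hs, hd⟩ := exists_step_pullback hT hy hrun hc hn
      exact ⟨t, d, hs, hs.one_le_gap, hd⟩)
    ⟨le_rfl, 0, hrun.start⟩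
  exact ⟨cfg', tr', h0, hs⟩

theorem side_of_blockPath_eq_nil {c d : T.Q × ℕ} {t : (T.pullback h).Trans}
    (hs : (T.pullback h).TapeStep (tape w) c t d) (ht : T.blockPath h t = []) :
    d.1 = c.1 ∧ T.side c.1 d.2 c.2 = T.side c.1 c.2 d.2 + 1 := by
  obtain ⟨htΔ, e, he, rfl, rfl⟩ := hs
  have hpath := traverses_blockPath htΔ
  rw [ht] at hpath
  obtain ⟨p, a, q⟩ := t
  obtain rfl : q = p := hpath.eq_of_nil
  refine ⟨rfl, ?_⟩
  by_cases hq : T.fwd q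
  · simp [TwoWayAut.source, TwoWayAut.target, TwoWayAut.side, TwoWayTrans.pullback, hq]
  · simp [TwoWayAut.source, TwoWayAut.target, TwoWayAut.side, TwoWayTrans.pullback, hq]

theorem side_of_forall_blockPath_eq_nil {c d : T.Q × ℕ} {l : List (T.pullback h).Trans}
    (hl : LPath ((T.pullback h).TapeStep (tape w)) c l d) (hnil : ∀ t ∈ l, T.blockPath h t = []) :
    d.1 = c.1 ∧ T.side c.1 d.2 c.2 = T.side c.1 c.2 d.2 + l.length := by
  induction hl with
  | nil c => exact ⟨rfl, rfl⟩
  | cons hs _ ih =>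
    obtain ⟨hstate, hside⟩ := side_of_blockPath_eq_nil hs (hnil _ List.mem_cons_self)
    obtain ⟨hstate', hside'⟩ := ih fun t ht => hnil t (List.mem_cons_of_mem _ ht)
    rw [hstate] at hstate' hside'
    refine ⟨hstate', ?_⟩
    unfold TwoWayAut.side at hside hside' ⊢
    split_ifs at hside hside' ⊢
    all_goals simp only [List.length_cons]; omega

theorem injective_of_tapeRun_pullback (hT : Deterministic T.toTwoWayAut)
    (hy : FlattenTo (fun i => h (w i)) y) (hrun : T.FullRun y cfg tr)
    (hrun' : (T.pullback h).TapeRun w cfg' tr') : Function.Injective cfg' := by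
  refine fun i j heq => ?_
  wlog hij : i ≤ j generalizing i j
  · exact (this j i heq.symm (le_of_not_ge hij)).symm
  obtain ⟨k, rfl⟩ := Nat.exists_eq_add_of_le hij
  have hlen : (prefixCat (fun j => T.blockPath h (tr' j)) i).length =
      (prefixCat (fun j => T.blockPath h (tr' j)) (i + k)).length := by
    have hexpand := fun n => (prefixCat_blockPath_eq_run hT hy hrun.toTapeRun hrun' n).2
    exact hrun.injective hT (by rw [← hexpand, ← hexpand, heq])
  have hnil : ∀ t ∈ (List.range' i k).map tr', T.blockPath h t = [] := by
    intro t ht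
    obtain ⟨m, hm, rfl⟩ := List.mem_map.1 ht
    rw [List.mem_range'_1] at hm
    have h1 := length_prefixCat_mono (fun j => T.blockPath h (tr' j)) hm.1
    have h2 := length_prefixCat_mono (fun j => T.blockPath h (tr' j)) (Nat.succ_le_of_lt hm.2)
    rw [Nat.succ_eq_add_one, length_prefixCat_succ] at h2
    exact List.length_eq_zero_iff.1 (by omega)
  have hside := (side_of_forall_blockPath_eq_nil (lpath_of_run hrun'.step i k) hnil).2
  rw [← heq, List.length_map, List.length_range', TwoWayAut.side_self] at hside
  omega

theorem exists_flattenTo_of_fullRun_pullback (hT : Reversible T.toTwoWayAut)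
    (hrun' : (T.pullback h).FullRun w cfg' tr') {x : ℕ → Γ}
    (hx : FlattenTo (fun j => (T.pullback h).out (tr' j)) x) :
    ∃ y, FlattenTo (fun i => h (w i)) y := by
  have hdet := (reversible_pullback (h := h) hT).1
  refine exists_flattenTo (forall_exists_le_length_prefixCat_iff.2 ?_)
  refine (hrun'.sameRecurrence hdet fun a => h a ≠ []).1 ?_
  have houtput := forall_exists_le_length_prefixCat_iff.1 hx.2
  have hfar := (TwoWayAut.tendsto_gap_of_injective (hrun'.injective hdet)).eventually_ge_atTop 2
  refine (houtput.and_eventually hfar).mono fun j ⟨hout, hj⟩ => ?_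
  obtain ⟨ht, _ | i, he, hsrc, -⟩ := hrun'.step j
  · have := TwoWayAut.source_le 0 (tr' j)
    rw [← hsrc] at this
    exact absurd (hj.trans this) (by decide)
  · have hletter : (tr' j).2.1 = some (w i) := (Option.some_injective _ he).symm
    refine ⟨w i, Option.mem_toList.2 hletter, fun hnil => hout ?_⟩
    have hpath := traverses_blockPath ht
    rw [hletter, block, hnil, List.map_nil] at hpath
    change (T.blockPath h (tr' j)).flatMap T.out = []
    rw [TwoWayAut.traverses_nil hpath, List.flatMap_nil]

theorem realizes_pullback_iff [Finite C] (hT : Reversible T.toTwoWayAut) {x : ℕ → Γ} :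
    (T.pullback h).Realizes w x ↔ ∃ y, FlattenTo (fun i => h (w i)) y ∧ T.Realizes y x := by
  have transfer : ∀ {y cfg tr cfg' tr'}, FlattenTo (fun i => h (w i)) y → T.FullRun y cfg tr →
      (T.pullback h).FullRun w cfg' tr' →
      (ParityCond (T.pullback h).toParityAut tr' ↔ ParityCond T.toParityAut tr) ∧
        (FlattenTo (fun j => (T.pullback h).out (tr' j)) x ↔
          FlattenTo (fun i => T.out (tr i)) x) := by
    intro y cfg tr cfg' tr' hy hrun hrun'
    have hflat := flattenTo_blockPath hT.1 hy hrun.toTapeRun hrun'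
    refine ⟨forall_congr' fun c => ?_, flattenTo_flatMap_iff hflat⟩
    rw [← sInf_minColor_eq (T.color c) hflat.sameRecurrence]
    rfl
  simp only [TwoWayTrans.realizes_iff]
  constructor
  · rintro ⟨cfg', tr', hrun', hcol, hx⟩
    obtain ⟨y, hy⟩ := exists_flattenTo_of_fullRun_pullback hT hrun' hx
    obtain ⟨cfg, tr, hrun⟩ := exists_fullRun_of_pullback hT.1 hy hrun'
    have := transfer hy hrun hrun'
    exact ⟨y, hy, cfg, tr, hrun, this.1.1 hcol, this.2.1 hx⟩
  · rintro ⟨y, hy, cfg, tr, hrun, hcol, hx⟩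
    obtain ⟨cfg', tr', hrun'⟩ := exists_tapeRun_pullback hT.1 hy hrun
    have hinj := injective_of_tapeRun_pullback hT.1 hy hrun hrun'
    have hfull : (T.pullback h).FullRun w cfg' tr' := hrun'.fullRun hinj
    have := transfer hy hrun hfull
    exact ⟨cfg', tr', hfull, this.1.2 hcol, this.2.2 hx⟩

end Pullback

/-! ### Running a transducer on the runs of a reversible automaton -/

section Cascade

variable {A Γ : Type}

namespace TwoWayAut

section MarkedStep

variable (M : TwoWayAut A)

/-- No transition of `M` leads from the end-marker to the initial state. -/
def NoReentry : Prop :=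
  ∀ q, (q, none, M.init) ∉ M.Δ

/-- The transition that a letter of `⊢r` stands for, where `r` is a sequence of transitions of
`M`: the end-marker stands for a virtual transition that reads the end-marker of the input and
leads to the initial configuration. -/
def transOf (b : Option M.Trans) : M.Trans :=
  b.getD (M.init, none, M.init)

/-- One step of `M` on `⊢w`, possibly by the virtual transition. Thus a run with transitions `r`
becomes a path labelled by `⊢r`. -/
def MarkedStep (w : ℕ → A) (c : M.Q × ℕ) (b : Option M.Trans) (d : M.Q × ℕ) : Prop :=
  (∀ t ∈ b, t ∈ M.Δ) ∧
    ∃ e, marked w e = (M.transOf b).2.1 ∧ c = M.source e (M.transOf b) ∧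
      d = M.target e (M.transOf b)

variable {M} {w : ℕ → A} {b b' : Option M.Trans}

theorem transOf_det (hM : Deterministic M) (hb : ∀ t ∈ b, t ∈ M.Δ) (hb' : ∀ t ∈ b', t ∈ M.Δ)
    (hstate : (M.transOf b).1 = (M.transOf b').1)
    (hletter : (M.transOf b).2.1 = (M.transOf b').2.1) : b = b' := by
  rcases b with _ | ⟨p, a, q⟩ <;> rcases b' with _ | ⟨p', a', q'⟩
  · rfl
  · obtain ⟨rfl, rfl⟩ : M.init = p' ∧ none = a' := ⟨hstate, hletter⟩
    exact absurd M.init_fwd (M.marker _ _ (hb' _ rfl)).1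
  · obtain ⟨rfl, rfl⟩ : p = M.init ∧ a = none := ⟨hstate, hletter⟩
    exact absurd M.init_fwd (M.marker _ _ (hb _ rfl)).1
  · obtain ⟨rfl, rfl⟩ : p = p' ∧ a = a' := ⟨hstate, hletter⟩
    rw [hM _ _ _ _ (hb _ rfl) (hb' _ rfl)]

theorem transOf_codet (hM : Codeterministic M) (hM' : M.NoReentry) (hb : ∀ t ∈ b, t ∈ M.Δ)
    (hb' : ∀ t ∈ b', t ∈ M.Δ) (hstate : (M.transOf b).2.2 = (M.transOf b').2.2)
    (hletter : (M.transOf b).2.1 = (M.transOf b').2.1) : b = b' := by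
  rcases b with _ | ⟨p, a, q⟩ <;> rcases b' with _ | ⟨p', a', q'⟩
  · rfl
  · obtain ⟨rfl, rfl⟩ : M.init = q' ∧ none = a' := ⟨hstate, hletter⟩
    exact absurd (hb' _ rfl) (hM' _)
  · obtain ⟨rfl, rfl⟩ : q = M.init ∧ a = none := ⟨hstate, hletter⟩
    exact absurd (hb _ rfl) (hM' _)
  · obtain ⟨rfl, rfl⟩ : q = q' ∧ a = a' := ⟨hstate, hletter⟩
    rw [hM _ _ _ _ (hb _ rfl) (hb' _ rfl)]

theorem detRel_markedStep (hM : Deterministic M) (w : ℕ → A) : DetRel (M.MarkedStep w) := by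
  rintro _ b _ b' _ ⟨hb, e, he, rfl, rfl⟩ ⟨hb', e', he', hs, rfl⟩
  obtain ⟨hstate, rfl⟩ := source_inj hs
  obtain rfl := transOf_det hM hb hb' hstate (he.symm.trans he')
  exact ⟨rfl, rfl⟩

theorem detRel_markedStep_swap (hM : Codeterministic M) (hM' : M.NoReentry) (w : ℕ → A) :
    DetRel fun d b c => M.MarkedStep w c b d := by
  rintro _ b _ b' _ ⟨hb, e, he, rfl, rfl⟩ ⟨hb', e', he', rfl, hs⟩
  obtain ⟨hstate, rfl⟩ := target_inj hs
  obtain rfl := transOf_codet hM hM' hb hb' hstate (he.symm.trans he')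
  exact ⟨rfl, rfl⟩

theorem terminal_swap_markedStep (w : ℕ → A) :
    Terminal (fun d b c => M.MarkedStep w c b d) (M.init, 0) := by
  rintro b c ⟨-, e, -, -, hd⟩
  obtain ⟨hq, hg⟩ := Prod.mk.inj hd
  rw [← hq, side_of_fwd M.init_fwd] at hg
  omega

theorem markedStep_none_iff {c d : M.Q × ℕ} :
    M.MarkedStep w c none d ↔ c = (M.init, 0) ∧ d = (M.init, 1) := by
  have hsource : M.source 0 (M.transOf none) = (M.init, 0) :=
    Prod.ext rfl (side_of_fwd M.init_fwd _ _)
  have htarget : M.target 0 (M.transOf none) = (M.init, 1) :=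
    Prod.ext rfl (side_of_fwd M.init_fwd _ _)
  constructor
  · rintro ⟨-, _ | e, he, rfl, rfl⟩
    · exact ⟨hsource, htarget⟩
    · cases he
  · rintro ⟨rfl, rfl⟩
    exact ⟨by simp, 0, rfl, hsource.symm, htarget.symm⟩

theorem markedStep_some_iff {c d : M.Q × ℕ} {t : M.Trans} :
    M.MarkedStep w c (some t) d ↔ M.TapeStep (tape w) c t d := by
  simp [MarkedStep, TapeStep, tape, transOf]

theorem MarkedStep.gap_le_succ {c d : M.Q × ℕ} (h : M.MarkedStep w c b d) : d.2 ≤ c.2 + 1 := by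
  obtain ⟨-, e, -, rfl, rfl⟩ := h
  exact (target_le e _).trans (Nat.add_le_add_right (le_source e _) 1)

end MarkedStep

variable (M : TwoWayAut A) (N : TwoWayAut M.Trans)

/-- The transition by which the cascade of `M` and `N` simulates the transition `t` of `N`: it
follows the transition of `M` that `t` reads, in the direction in which `N` enters it, and leaves
it on the side on which `N` leaves it. -/
noncomputable def cascadeTrans (t : N.Trans) : (M.Q × N.Q) × Option A × (M.Q × N.Q) :=
  ((N.side t.1 (M.transOf t.2.1).1 (M.transOf t.2.1).2.2, t.1), (M.transOf t.2.1).2.1,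
    (N.side t.2.2 (M.transOf t.2.1).2.2 (M.transOf t.2.1).1, t.2.2))

/-- The transitions of `N` that can occur on a run of `M`. -/
def cascadeDomain : Set N.Trans :=
  {t | t ∈ N.Δ ∧ ∀ s ∈ t.2.1, s ∈ M.Δ}

/-- The automaton that runs `N` on the sequence of transitions of the run of `M`. Its head is
always at a configuration of that run; when `N` moves backward, it follows the run backward,
which is possible because `M` is codeterministic. -/
noncomputable def cascade : TwoWayAut A where
  Q := M.Q × N.Q
  finQ := inferInstance
  fwd s := M.fwd s.1 ↔ N.fwd s.2
  init := (M.init, N.init)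
  init_fwd := iff_of_true M.init_fwd N.init_fwd
  Δ := M.cascadeTrans N '' M.cascadeDomain N
  marker := by
    rintro _ _ ⟨⟨p, b, q⟩, ht, heq⟩
    obtain ⟨rfl, htail⟩ := Prod.mk.inj heq
    obtain ⟨hletter, rfl⟩ := Prod.mk.inj htail
    rcases b with _ | ⟨s, a, s'⟩
    · have := N.marker p q ht.1
      have := M.init_fwd
      simp_all [side, transOf]
    · obtain rfl : a = none := hletter
      have := M.marker s s' (ht.2 _ rfl)
      by_cases hp : N.fwd p <;> by_cases hq : N.fwd q <;> simp_all [side, transOf]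

variable {M N}

theorem cascadeTrans_det (hM : Reversible M) (hM' : M.NoReentry) (hN : Deterministic N)
    {t t' : N.Trans} (ht : t ∈ M.cascadeDomain N) (ht' : t' ∈ M.cascadeDomain N)
    (hstate : (M.cascadeTrans N t).1 = (M.cascadeTrans N t').1)
    (hletter : (M.cascadeTrans N t).2.1 = (M.cascadeTrans N t').2.1) : t = t' := by
  obtain ⟨p, b, q⟩ := t
  obtain ⟨p', b', q'⟩ := t'
  obtain ⟨hside, rfl⟩ := Prod.mk.inj hstate
  obtain rfl : b = b' := by
    dsimp only [cascadeTrans] at hside hletter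
    by_cases hp : N.fwd p
    · rw [side_of_fwd hp, side_of_fwd hp] at hside
      exact transOf_det hM.1 ht.2 ht'.2 hside hletter
    · rw [side_of_not_fwd hp, side_of_not_fwd hp] at hside
      exact transOf_codet hM.2 hM' ht.2 ht'.2 hside hletter
  rw [hN _ _ _ _ ht.1 ht'.1]

theorem cascadeTrans_codet (hM : Reversible M) (hM' : M.NoReentry) (hN : Codeterministic N)
    {t t' : N.Trans} (ht : t ∈ M.cascadeDomain N) (ht' : t' ∈ M.cascadeDomain N)
    (hstate : (M.cascadeTrans N t).2.2 = (M.cascadeTrans N t').2.2)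
    (hletter : (M.cascadeTrans N t).2.1 = (M.cascadeTrans N t').2.1) : t = t' := by
  obtain ⟨p, b, q⟩ := t
  obtain ⟨p', b', q'⟩ := t'
  obtain ⟨hside, rfl⟩ := Prod.mk.inj hstate
  obtain rfl : b = b' := by
    dsimp only [cascadeTrans] at hside hletter
    by_cases hq : N.fwd q
    · rw [side_of_fwd hq, side_of_fwd hq] at hside
      exact transOf_codet hM.2 hM' ht.2 ht'.2 hside hletter
    · rw [side_of_not_fwd hq, side_of_not_fwd hq] at hside
      exact transOf_det hM.1 ht.2 ht'.2 hside hletter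
  rw [hN _ _ _ _ ht.1 ht'.1]

theorem injOn_cascadeTrans (hM : Reversible M) (hM' : M.NoReentry) (hN : Deterministic N) :
    Set.InjOn (M.cascadeTrans N) (M.cascadeDomain N) := fun _ ht _ ht' heq =>
  cascadeTrans_det hM hM' hN ht ht' (congrArg Prod.fst heq) (congrArg (·.2.1) heq)

theorem reversible_cascade (hM : Reversible M) (hM' : M.NoReentry) (hN : Reversible N) :
    Reversible (M.cascade N) := by
  constructor
  · rintro _ _ _ _ ⟨t, ht, hteq⟩ ⟨t', ht', hteq'⟩
    obtain rfl := cascadeTrans_det hM hM' hN.1 ht ht' (by rw [hteq, hteq']) (by rw [hteq, hteq'])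
    exact congrArg (·.2.2) (hteq.symm.trans hteq')
  · rintro _ _ _ _ ⟨t, ht, hteq⟩ ⟨t', ht', hteq'⟩
    obtain rfl := cascadeTrans_codet hM hM' hN.2 ht ht' (by rw [hteq, hteq']) (by rw [hteq, hteq'])
    exact congrArg Prod.fst (hteq.symm.trans hteq')

/-- The configuration of `M.cascade N` with head at the configuration `c` of `M` and `N` in the
state `p`. -/
def pairCfg (c : M.Q × ℕ) (p : N.Q) : (M.cascade N).Q × ℕ :=
  ((c.1, p), c.2)

theorem pairCfg_inj {c c' : M.Q × ℕ} {p p' : N.Q} (h : pairCfg c p = pairCfg c' p') :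
    c = c' ∧ p = p' := by
  obtain ⟨hs, hg⟩ := Prod.mk.inj h
  obtain ⟨hq, hp⟩ := Prod.mk.inj hs
  exact ⟨Prod.ext hq hg, hp⟩

theorem side_cascade {X : Type*} (q : M.Q) (p : N.Q) (x y : X) :
    (M.cascade N).side (q, p) x y = N.side p (M.side q x y) (M.side q y x) := by
  unfold side
  by_cases hq : M.fwd q <;> by_cases hp : N.fwd p <;> simp [cascade, hq, hp]

theorem source_cascadeTrans (e : ℕ) (t : N.Trans) :
    (M.cascade N).source e (M.cascadeTrans N t) =
      pairCfg (N.side t.1 (M.source e (M.transOf t.2.1)) (M.target e (M.transOf t.2.1))) t.1 := by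
  simp only [source, target, pairCfg, cascadeTrans, side_cascade]
  by_cases hp : N.fwd t.1
  · simp only [side_of_fwd hp]
  · simp only [side_of_not_fwd hp]

theorem target_cascadeTrans (e : ℕ) (t : N.Trans) :
    (M.cascade N).target e (M.cascadeTrans N t) =
      pairCfg (N.side t.2.2 (M.target e (M.transOf t.2.1)) (M.source e (M.transOf t.2.1)))
        t.2.2 := by
  simp only [source, target, pairCfg, cascadeTrans, side_cascade]
  by_cases hp : N.fwd t.2.2
  · simp only [side_of_fwd hp]
  · simp only [side_of_not_fwd hp]

variable {w : ℕ → A}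

theorem tapeStep_cascade_iff {c d : (M.cascade N).Q × ℕ} {t : (M.cascade N).Trans} :
    (M.cascade N).TapeStep (tape w) c t d ↔ ∃ t' ∈ N.Δ, ∃ c' d', M.MarkedStep w c' t'.2.1 d' ∧
      t = M.cascadeTrans N t' ∧ c = pairCfg (N.side t'.1 c' d') t'.1 ∧
      d = pairCfg (N.side t'.2.2 d' c') t'.2.2 := by
  constructor
  · rintro ⟨⟨t', ⟨ht', hletter⟩, rfl⟩, e, he, rfl, rfl⟩
    exact ⟨t', ht', _, _, ⟨hletter, e, Option.some_injective _ he, rfl, rfl⟩, rfl,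
      source_cascadeTrans e t', target_cascadeTrans e t'⟩
  · rintro ⟨t', ht', _, _, ⟨hletter, e, he, rfl, rfl⟩, rfl, rfl, rfl⟩
    exact ⟨⟨t', ⟨ht', hletter⟩, rfl⟩, e, congrArg some he, (source_cascadeTrans e t').symm,
      (target_cascadeTrans e t').symm⟩

/-- The configurations of a run of `M`, preceded by the one from which the virtual transition
leads to the initial configuration. -/
def preRun (cfg : ℕ → M.Q × ℕ) : ℕ → M.Q × ℕ
  | 0 => (M.init, 0)
  | g + 1 => cfg g

variable {cfg : ℕ → M.Q × ℕ} {tr : ℕ → M.Trans}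

theorem TapeRun.markedStep (h : M.TapeRun w cfg tr) (g : ℕ) :
    M.MarkedStep w (preRun cfg g) (marked tr g) (preRun cfg (g + 1)) := by
  cases g with
  | zero => exact markedStep_none_iff.2 ⟨rfl, h.start⟩
  | succ g => exact markedStep_some_iff.2 (h.step g)

theorem FullRun.injective_preRun (hM : Deterministic M) (h : M.FullRun w cfg tr) :
    Function.Injective (preRun cfg) := by
  have hne : ∀ g, preRun cfg (g + 1) ≠ preRun cfg 0 := fun g heq =>
    absurd (h.one_le_gap g) (by rw [show cfg g = (M.init, 0) from heq]; simp)
  rintro (_ | g) (_ | g') heq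
  · rfl
  · exact absurd heq.symm (hne g')
  · exact absurd heq (hne g)
  · exact congrArg _ (h.injective hM heq)

/-- The configuration of `M.cascade N` that corresponds to the configuration `c` of `N` on the
sequence of transitions of the run `cfg` of `M`. -/
def cascadeCfg (cfg : ℕ → M.Q × ℕ) (c : N.Q × ℕ) : (M.cascade N).Q × ℕ :=
  pairCfg (preRun cfg c.2) c.1

theorem FullRun.injective_cascadeCfg (hM : Deterministic M) (h : M.FullRun w cfg tr) :
    Function.Injective (cascadeCfg (N := N) cfg) := fun _ _ heq =>
  Prod.ext (pairCfg_inj heq).2 (h.injective_preRun hM (pairCfg_inj heq).1)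

theorem TapeRun.mem_cascadeDomain (h : M.TapeRun w cfg tr) {c d : N.Q × ℕ} {t : N.Trans}
    (hs : N.TapeStep (tape tr) c t d) : t ∈ M.cascadeDomain N := by
  obtain ⟨ht, e, he, -, -⟩ := hs
  exact ⟨ht, Option.some_injective _ he ▸ (h.markedStep e).1⟩

theorem TapeRun.tapeStep_cascade (h : M.TapeRun w cfg tr) {c d : N.Q × ℕ} {t : N.Trans}
    (hs : N.TapeStep (tape tr) c t d) :
    (M.cascade N).TapeStep (tape w) (cascadeCfg cfg c) (M.cascadeTrans N t)
      (cascadeCfg cfg d) := by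
  obtain ⟨ht, e, he, rfl, rfl⟩ := hs
  refine tapeStep_cascade_iff.2 ⟨t, ht, preRun cfg e, preRun cfg (e + 1), ?_, rfl, ?_, ?_⟩
  · exact Option.some_injective _ he ▸ h.markedStep e
  · exact congrArg (pairCfg · t.1) (map_side (preRun cfg) t.1 e (e + 1))
  · exact congrArg (pairCfg · t.2.2) (map_side (preRun cfg) t.2.2 (e + 1) e)

theorem TapeRun.exists_of_markedStep (hM : Reversible M) (hM' : M.NoReentry)
    (h : M.TapeRun w cfg tr) {c d : M.Q × ℕ} {b : Option M.Trans} (hs : M.MarkedStep w c b d)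
    {p : N.Q} {g : ℕ} (hg : preRun cfg g = N.side p c d) :
    ∃ e, g = N.side p e (e + 1) ∧ b = marked tr e ∧ c = preRun cfg e ∧ d = preRun cfg (e + 1) := by
  by_cases hp : N.fwd p
  · rw [side_of_fwd hp] at hg
    subst hg
    obtain ⟨rfl, rfl⟩ := detRel_markedStep hM.1 w hs (h.markedStep g)
    exact ⟨g, (side_of_fwd hp _ _).symm, rfl, rfl, rfl⟩
  · rw [side_of_not_fwd hp] at hg
    subst hg
    obtain _ | e := g
    · exact absurd hs (terminal_swap_markedStep w _ _)
    · obtain ⟨rfl, rfl⟩ := detRel_markedStep_swap hM.2 hM' w hs (h.markedStep e)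
      exact ⟨e, (side_of_not_fwd hp _ _).symm, rfl, rfl, rfl⟩

theorem TapeRun.exists_tapeStep_of_cascade (hM : Reversible M) (hM' : M.NoReentry)
    (h : M.TapeRun w cfg tr) {c : N.Q × ℕ} {t : (M.cascade N).Trans} {d : (M.cascade N).Q × ℕ}
    (hs : (M.cascade N).TapeStep (tape w) (cascadeCfg cfg c) t d) :
    ∃ t' d', N.TapeStep (tape tr) c t' d' ∧ t = M.cascadeTrans N t' ∧ d = cascadeCfg cfg d' := by
  obtain ⟨t', ht', c₀, d₀, hm, rfl, hc, rfl⟩ := tapeStep_cascade_iff.1 hs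
  obtain ⟨hpos, hstate⟩ := pairCfg_inj hc
  obtain ⟨e, hg, hletter, rfl, rfl⟩ := h.exists_of_markedStep hM hM' hm hpos
  refine ⟨t', N.target e t', ⟨ht', e, congrArg some hletter.symm, Prod.ext hstate hg, rfl⟩, rfl, ?_⟩
  exact congrArg (pairCfg · t'.2.2) (map_side (preRun cfg) t'.2.2 (e + 1) e).symm

theorem FullRun.cascade (hM : Deterministic M) (hN : Deterministic N) (h : M.FullRun w cfg tr)
    {cfg' : ℕ → N.Q × ℕ} {tr' : ℕ → N.Trans} (h' : N.FullRun tr cfg' tr') :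
    (M.cascade N).FullRun w (fun i => cascadeCfg cfg (cfg' i))
      (fun i => M.cascadeTrans N (tr' i)) := by
  refine TapeRun.fullRun ⟨?_, fun i => h.tapeStep_cascade (h'.step i)⟩
    ((h.injective_cascadeCfg hM).comp (h'.injective hN))
  rw [h'.start]
  exact congrArg (pairCfg · N.init) h.start

theorem FullRun.exists_of_cascade (hM : Reversible M) (hM' : M.NoReentry) (hN : Reversible N)
    (h : M.FullRun w cfg tr) {cfg' : ℕ → (M.cascade N).Q × ℕ} {tr' : ℕ → (M.cascade N).Trans}
    (h' : (M.cascade N).FullRun w cfg' tr') :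
    ∃ cfg'' tr'', N.FullRun tr cfg'' tr'' ∧ tr' = fun i => M.cascadeTrans N (tr'' i) := by
  have hinit : cascadeCfg cfg (N.init, 1) = ((M.cascade N).init, 1) :=
    congrArg (pairCfg · N.init) h.start
  have hex : ∀ i, ∃ c : N.Q × ℕ, cfg' i = cascadeCfg cfg c := fun i => by
    induction i with
    | zero => exact ⟨_, h'.start.trans hinit.symm⟩
    | succ i ih =>
      obtain ⟨c, hc⟩ := ih
      obtain ⟨t, d, -, -, hd⟩ := h.exists_tapeStep_of_cascade hM hM' (hc ▸ h'.step i)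
      exact ⟨d, hd⟩
  have hinj := h.injective_cascadeCfg (N := N) hM.1
  choose cfg'' hcfg using hex
  have hstep : ∀ i, ∃ t, N.TapeStep (tape tr) (cfg'' i) t (cfg'' (i + 1)) ∧
      tr' i = M.cascadeTrans N t := fun i => by
    obtain ⟨t, d, hs, ht, hd⟩ := h.exists_tapeStep_of_cascade hM hM' (hcfg i ▸ h'.step i)
    obtain rfl := hinj ((hcfg (i + 1)).symm.trans hd)
    exact ⟨t, hs, ht⟩
  choose tr'' hs htr using hstep
  refine ⟨cfg'', tr'', TapeRun.fullRun ⟨hinj ?_, hs⟩ fun i j hij => ?_, funext htr⟩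
  · rw [← hcfg, h'.start, hinit]
  · exact h'.injective (reversible_cascade hM hM' hN).1 (by rw [hcfg, hcfg, hij])

theorem MarkedStep.exists_lpath_iff (hM : Codeterministic M) (hM' : M.NoReentry)
    {c d : M.Q × ℕ} {b : Option M.Trans} (hs : M.MarkedStep w c b d) :
    (∃ l, LPath (M.MarkedStep w) (M.init, 0) l d) ↔
      ∃ l, LPath (M.MarkedStep w) (M.init, 0) l c := by
  constructor
  · rintro ⟨l, hl⟩
    exact hl.exists_lpath_of_step (detRel_markedStep_swap hM hM' w)
      (terminal_swap_markedStep w) hs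
  · rintro ⟨l, hl⟩
    exact ⟨_, hl.append (.single hs)⟩

theorem TapeRun.exists_lpath_of_cascade (hM : Codeterministic M) (hM' : M.NoReentry)
    {cfg' : ℕ → (M.cascade N).Q × ℕ} {tr' : ℕ → (M.cascade N).Trans}
    (h' : (M.cascade N).TapeRun w cfg' tr') (i : ℕ) :
    ∃ l, LPath (M.MarkedStep w) (M.init, 0) l ((cfg' i).1.1, (cfg' i).2) := by
  induction i with
  | zero =>
    rw [h'.start]
    exact ⟨_, .single (markedStep_none_iff.2 ⟨rfl, rfl⟩)⟩
  | succ i ih =>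
    obtain ⟨t, -, c, d, hm, -, hc, hd⟩ := tapeStep_cascade_iff.1 (h'.step i)
    let P : M.Q × ℕ → Prop := fun c => ∃ l, LPath (M.MarkedStep w) (M.init, 0) l c
    have hends : P d ↔ P c := hm.exists_lpath_iff hM hM'
    have hside : ∀ (p : N.Q) {x y}, (P x ↔ P y) → (P (N.side p x y) ↔ P x) := fun p x y hxy => by
      by_cases hp : N.fwd p
      · rw [side_of_fwd hp]
      · rw [side_of_not_fwd hp, hxy]
    rw [hc] at ih
    rw [hd]
    exact (hside _ hends).2 (hends.2 ((hside _ hends.symm).1 ih))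

theorem TapeRun.of_markedStep_run (hM : Deterministic M) {D : ℕ → M.Q × ℕ}
    {b : ℕ → Option M.Trans} (h0 : D 0 = (M.init, 0))
    (hs : ∀ g, M.MarkedStep w (D g) (b g) (D (g + 1))) :
    ∃ tr, M.TapeRun w (fun i => D (i + 1)) tr := by
  have hletter : ∀ i, ∃ t, b (i + 1) = some t := fun i => by
    refine Option.ne_none_iff_exists'.1 fun hnone => ?_
    have hstep := hs (i + 1)
    rw [hnone, markedStep_none_iff] at hstep
    exact terminal_swap_markedStep w _ _ (hstep.1 ▸ hs i)
  choose tr htr using hletter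
  refine ⟨tr, ?_, fun i => markedStep_some_iff.1 (htr i ▸ hs (i + 1))⟩
  exact (detRel_markedStep hM w (h0 ▸ hs 0) (markedStep_none_iff.2 ⟨rfl, rfl⟩)).2

theorem FullRun.exists_fullRun_of_cascade (hM : Reversible M) (hM' : M.NoReentry)
    {cfg' : ℕ → (M.cascade N).Q × ℕ} {tr' : ℕ → (M.cascade N).Trans}
    (h' : (M.cascade N).FullRun w cfg' tr') : ∃ cfg tr, M.FullRun w cfg tr := by
  have hfar : ∀ n, ∃ l c, n ≤ c.2 ∧ LPath (M.MarkedStep w) (M.init, 0) l c := fun n => by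
    obtain ⟨i, hi⟩ := h'.unbounded n
    obtain ⟨l, hl⟩ := h'.exists_lpath_of_cascade hM.2 hM' i
    exact ⟨l, _, hi, hl⟩
  obtain ⟨D, b, h0, hs⟩ := exists_run_of_long_lpaths (detRel_markedStep hM.1 w) fun n => by
    obtain ⟨l, c, hn, hl⟩ := hfar n
    have hle := hl.le_add_length (f := Prod.snd) fun _ _ _ => MarkedStep.gap_le_succ
    exact ⟨l, c, hn.trans (by simpa using hle), hl⟩
  obtain ⟨tr, hrun⟩ := TapeRun.of_markedStep_run hM.1 h0 hs
  refine ⟨_, tr, hrun, fun n => ?_⟩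
  obtain ⟨l, c, hn, hl⟩ := hfar (n + 1)
  obtain ⟨-, rfl⟩ := (h0 ▸ hl).eq_run (detRel_markedStep hM.1 w) hs
  rw [Nat.zero_add] at hn
  cases hk : l.length with
  | zero => simp [hk, h0] at hn
  | succ k => exact ⟨k, Nat.le_of_succ_le (hk ▸ hn)⟩

end TwoWayAut

variable {M : ParityAut A} {N : TwoWayTrans M.Trans Γ} {w : ℕ → A}

/-- The transition of `N` that a transition of the cascade of `M` and `N` simulates; arbitrary on
triples that are not transitions of the cascade. -/
noncomputable def simulatedTrans (M : TwoWayAut A) (N : TwoWayAut M.Trans) :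
    (M.cascade N).Trans → N.Trans :=
  haveI : Nonempty N.Trans := ⟨(N.init, none, N.init)⟩
  Function.invFunOn (M.cascadeTrans N) (M.cascadeDomain N)

theorem simulatedTrans_cascadeTrans {M : TwoWayAut A} {N : TwoWayAut M.Trans}
    (hM : Reversible M) (hM' : M.NoReentry) (hN : Deterministic N) {t : N.Trans}
    (ht : t ∈ M.cascadeDomain N) : simulatedTrans M N (M.cascadeTrans N t) = t :=
  haveI : Nonempty N.Trans := ⟨t⟩
  (TwoWayAut.injOn_cascadeTrans hM hM' hN).leftInvOn_invFunOn ht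

/-- The transducer that runs `N` on the sequence of transitions of the run of `M` and accepts if
both runs are accepting. Since `N` visits each position of its input, and only finitely often, the
transitions that `M` takes infinitely often are those that `N` reads infinitely often. -/
noncomputable def ParityAut.cascade (M : ParityAut A) (N : TwoWayTrans M.Trans Γ) :
    TwoWayTrans A Γ where
  toTwoWayAut := M.toTwoWayAut.cascade N.toTwoWayAut
  CIdx := M.CIdx ⊕ N.CIdx
  finC := inferInstance
  color := Sum.elim
    (fun c => minColor (M.color c) fun t => (simulatedTrans _ _ t).2.1.toList)
    (fun c => minColor (N.color c) fun t => [simulatedTrans _ _ t])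
  out := N.out ∘ simulatedTrans _ _

theorem parityCond_cascade_iff [Finite A] (hN : Deterministic N.toTwoWayAut)
    {tr : ℕ → M.Trans} {cfg' : ℕ → N.Q × ℕ} {tr' : ℕ → N.Trans} (h' : N.FullRun tr cfg' tr')
    {tU : ℕ → (M.cascade N).Trans} (htU : ∀ i, simulatedTrans _ _ (tU i) = tr' i) :
    ParityCond (M.cascade N).toParityAut tU ↔
      ParityCond M tr ∧ ParityCond N.toParityAut tr' := by
  let sim := simulatedTrans M.toTwoWayAut N.toTwoWayAut
  have hread : SameRecurrence (fun i => (sim (tU i)).2.1.toList) tr := by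
    simpa only [sim, htU] using h'.sameRecurrence hN
  have hsim : SameRecurrence (fun i => [sim (tU i)]) tr' := fun P => by
    simp only [sim, htU, List.mem_singleton, exists_eq_left]
  exact Sum.forall.trans <| and_congr
    (forall_congr' fun c => iff_of_eq <| congrArg Even <|
      sInf_minColor_eq (M.color c) (L := fun t => (sim t).2.1.toList) hread)
    (forall_congr' fun c => iff_of_eq <| congrArg Even <|
      sInf_minColor_eq (N.color c) (L := fun t => [sim t]) hsim)

theorem realizes_cascade_iff [Finite A] (hM : Reversible M.toTwoWayAut)
    (hM' : M.toTwoWayAut.NoReentry) (hN : Reversible N.toTwoWayAut) {x : ℕ → Γ} :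
    (M.cascade N).Realizes w x ↔
      ∃ cfg tr, M.FullRun w cfg tr ∧ ParityCond M tr ∧ N.Realizes tr x := by
  have transfer : ∀ {cfg tr cfg' tr'}, M.FullRun w cfg tr → N.FullRun tr cfg' tr' →
      (ParityCond (M.cascade N).toParityAut (fun i => M.cascadeTrans N.toTwoWayAut (tr' i)) ↔
        ParityCond M tr ∧ ParityCond N.toParityAut tr') ∧
      (fun i => (M.cascade N).out (M.cascadeTrans N.toTwoWayAut (tr' i))) =
        fun i => N.out (tr' i) := fun {cfg tr cfg' tr'} hrun hrun' => by
    have hsim : ∀ i, simulatedTrans _ _ (M.cascadeTrans N.toTwoWayAut (tr' i)) = tr' i := fun i =>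
      simulatedTrans_cascadeTrans hM hM' hN.1 (hrun.mem_cascadeDomain (hrun'.step i))
    exact ⟨parityCond_cascade_iff hN.1 hrun' hsim, funext fun i => congrArg N.out (hsim i)⟩
  simp only [TwoWayTrans.realizes_iff]
  constructor
  · rintro ⟨cfgU, trU, hU, hcol, hout⟩
    obtain ⟨cfg, tr, hrun⟩ := hU.exists_fullRun_of_cascade hM hM'
    obtain ⟨cfg', tr', hrun', rfl⟩ := hrun.exists_of_cascade hM hM' hN hU
    obtain ⟨hparity, hword⟩ := transfer hrun hrun'
    obtain ⟨hcolM, hcolN⟩ := hparity.1 hcol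
    exact ⟨cfg, tr, hrun, hcolM, cfg', tr', hrun', hcolN, hword ▸ hout⟩
  · rintro ⟨cfg, tr, hrun, hcolM, cfg', tr', hrun', hcolN, hout⟩
    obtain ⟨hparity, hword⟩ := transfer hrun hrun'
    exact ⟨_, _, hrun.cascade hM.1 hN.1 hrun', hparity.2 ⟨hcolM, hcolN⟩, hword.symm ▸ hout⟩

end Cascade

/-! ### Composition -/

section Composition

variable {A B Γ : Type}

namespace TwoWayAut

/-- The automaton `M` without the transitions that lead from the end-marker to the initial state.
No run that reads the whole word takes such a transition, as it would repeat the initial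
configuration. -/
def trim (M : TwoWayAut A) : TwoWayAut A where
  __ := M
  Δ := {t ∈ M.Δ | t.2 ≠ (none, M.init)}
  marker p q h := M.marker p q h.1

variable {M : TwoWayAut A} {w : ℕ → A} {cfg : ℕ → M.Q × ℕ} {tr : ℕ → M.Trans}

theorem noReentry_trim : M.trim.NoReentry :=
  fun _ h => h.2 rfl

theorem reversible_trim (hM : Reversible M) : Reversible M.trim :=
  ⟨fun _ _ _ _ h h' => hM.1 _ _ _ _ h.1 h'.1, fun _ _ _ _ h h' => hM.2 _ _ _ _ h.1 h'.1⟩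

theorem fullRun_trim_iff (hM : Deterministic M) :
    M.trim.FullRun w cfg tr ↔ M.FullRun w cfg tr := by
  refine ⟨fun h => ⟨⟨h.start, fun i => ⟨(h.step i).1.1, (h.step i).2⟩⟩, h.unbounded⟩,
    fun h => ⟨⟨h.start, fun i => ⟨⟨(h.step i).1, fun heq => ?_⟩, (h.step i).2⟩⟩, h.unbounded⟩⟩
  obtain ⟨-, _ | e, he, -, hd⟩ := h.step i
  · have hrepeat : cfg (i + 1) = cfg 0 := by
      rw [hd, h.start, target, heq, side_of_fwd M.init_fwd]
    exact absurd (h.injective hM hrepeat) i.succ_ne_zero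
  · rw [heq] at he
    cases he

end TwoWayAut

/-- The transducer `S` with its automaton trimmed. -/
def TwoWayTrans.trim (S : TwoWayTrans A B) : TwoWayTrans A B where
  __ := S
  toTwoWayAut := S.toTwoWayAut.trim

theorem realizes_trim_iff {S : TwoWayTrans A B} (hS : Deterministic S.toTwoWayAut) {u : ℕ → A}
    {y : ℕ → B} : S.trim.Realizes u y ↔ S.Realizes u y := by
  simp only [TwoWayTrans.realizes_iff]
  exact exists_congr fun _ => exists_congr fun _ =>
    and_congr_left fun _ => TwoWayAut.fullRun_trim_iff hS

theorem realizes_cascade_pullback_iff [Finite A] {S : TwoWayTrans A B} {T : TwoWayTrans B Γ}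
    (hS : Reversible S.toTwoWayAut) (hS' : S.toTwoWayAut.NoReentry)
    (hT : Reversible T.toTwoWayAut) {u : ℕ → A} {x : ℕ → Γ} :
    (S.toParityAut.cascade (T.pullback S.out)).Realizes u x ↔
      ∃ y, S.Realizes u y ∧ T.Realizes y x := by
  simp only [realizes_cascade_iff hS hS' (reversible_pullback hT), realizes_pullback_iff hT,
    TwoWayTrans.realizes_iff (T := S)]
  constructor
  · rintro ⟨cfg, tr, hrun, hcol, y, hy, hx⟩
    exact ⟨y, ⟨cfg, tr, hrun, hcol, hy⟩, hx⟩
  · rintro ⟨y, ⟨cfg, tr, hrun, hcol, hy⟩, hx⟩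
    exact ⟨cfg, tr, hrun, hcol, y, hy, hx⟩

theorem rbt_composition_general [Finite A] (S : TwoWayTrans A B) (T : TwoWayTrans B Γ)
    (hS : Reversible S.toTwoWayAut) (hT : Reversible T.toTwoWayAut) :
    ∃ U : TwoWayTrans A Γ, Reversible U.toTwoWayAut ∧
      Fintype.card U.Q = Fintype.card S.Q * Fintype.card T.Q ∧
      ∀ u x, U.Realizes u x ↔ ∃ y, S.Realizes u y ∧ T.Realizes y x := by
  have hS' : Reversible S.trim.toTwoWayAut := TwoWayAut.reversible_trim hS
  have hentry : S.trim.toTwoWayAut.NoReentry := TwoWayAut.noReentry_trim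
  refine ⟨S.trim.toParityAut.cascade (T.pullback S.trim.out),
    TwoWayAut.reversible_cascade hS' hentry (reversible_pullback hT), Fintype.card_prod _ _,
    fun u x => ?_⟩
  simp only [realizes_cascade_pullback_iff hS' hentry hT, realizes_trim_iff hS.1]

end Composition

/-- Composition of reversible two-way parity transducers: given reversible
`S` (with `n` states, output alphabet `B`) and `T` (with `m` states, input alphabet `B`),
there is a reversible two-way parity transducer `U` with at most `C·n·m` states such that
`⟦U⟧ = ⟦T⟧ ∘ ⟦S⟧` as partial functions (stated via equality of graphs, which gives in
particular `dom U = {u ∈ dom S : ⟦S⟧ u ∈ dom T}` and `⟦U⟧ u = ⟦T⟧ (⟦S⟧ u)`). -/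
theorem rbt_composition :
    ∃ C : ℕ, ∀ (A B Γ : Type) [Fintype A] [Fintype B] [Fintype Γ]
      (S : TwoWayTrans A B) (T : TwoWayTrans B Γ) (n m : ℕ),
      Reversible S.toTwoWayAut → Reversible T.toTwoWayAut →
      Fintype.card S.Q = n → Fintype.card T.Q = m →
      ∃ U : TwoWayTrans A Γ,
        Reversible U.toTwoWayAut ∧
        Fintype.card U.Q ≤ C * n * m ∧
        (∀ u x, U.Realizes u x ↔ ∃ y, S.Realizes u y ∧ T.Realizes y x) := by
  refine ⟨1, fun A B Γ _ _ _ S T n m hS hT hn hm => ?_⟩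
  obtain ⟨U, hU, hcard, hreal⟩ := rbt_composition_general S T hS hT
  exact ⟨U, hU, by rw [hcard, hn, hm, one_mul], hreal⟩

end Paper
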